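/- arXiv:1209.1167 — 4 statements merged into one kernel-verified Lean document; each statement's English description precedes it below -/
import Mathlib

section
/- Every finite string group generated by involutions (sggi) is covered by a finite string C-group. That is, if G is a finite group generated by elements g_0, ..., g_{n-1} with g_i^2 = 1 for all i and (g_j g_k)^2 = 1 whenever |j - k| > 1, then there exists a finite group G' generated by elements g'_0, ..., g'_{n-1}, each of order exactly 2, satisfying (g'_j g'_k)^2 = 1 for |j - k| > 1 and the intersection condition, together with a group epimorphism G' → G mapping g'_i to g_i for each i. -/
/-- A string group generated by involutions (sggi): the group is generated by
`g 0, ..., g (n-1)`, each `g i` squares to the identity, and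
`(g i * g j)^2 = 1` whenever `|i - j| > 1`. -/
def IsSggi {G : Type*} [Group G] {n : ℕ} (g : Fin n → G) : Prop :=
  Subgroup.closure (Set.range g) = ⊤ ∧ (∀ i, g i ^ 2 = 1) ∧
    ∀ i j : Fin n, 1 < |(i : ℤ) - (j : ℤ)| → (g i * g j) ^ 2 = 1

/-- A string C-group: an sggi whose generators have order exactly `2` and which
satisfies the intersection condition. -/
def IsStringCGroup {G : Type*} [Group G] {n : ℕ} (g : Fin n → G) : Prop :=
  IsSggi g ∧ (∀ i, orderOf (g i) = 2) ∧
    ∀ I J : Set (Fin n),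
      Subgroup.closure (g '' I) ⊓ Subgroup.closure (g '' J)
        = Subgroup.closure (g '' (I ∩ J))

/-- `H` (generated by `h 0, ..., h (k-1)`) covers the sggi `⟨g 0, ..., g (k-1)⟩`:
there is a homomorphism sending each `h t` to `g t` whose range is exactly the
subgroup generated by the `g t`, i.e. an epimorphism of sggi's. -/
def SggiCovers {H G : Type*} [Group H] [Group G] {k : ℕ}
    (h : Fin k → H) (g : Fin k → G) : Prop :=
  ∃ φ : H →* G, (∀ t, φ (h t) = g t) ∧
    φ.range = Subgroup.closure (Set.range g)

/-- The sggi `⟨h 0, ..., h (k-1)⟩` is isomorphic to the sggi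
`⟨g 0, ..., g (k-1)⟩` via a map sending each `h t` to `g t`: there is an
injective homomorphism on the subgroup generated by the `h t` sending each `h t`
to `g t` (its range is then automatically the subgroup generated by the `g t`). -/
def SggiIsoVia {H G : Type*} [Group H] [Group G] {k : ℕ}
    (h : Fin k → H) (g : Fin k → G) : Prop :=
  ∃ φ : ↥(Subgroup.closure (Set.range h)) →* G,
    Function.Injective φ ∧
    ∀ t, φ ⟨h t, Subgroup.subset_closure (Set.mem_range_self t)⟩ = g t

/-- A group bundled with its carrier. -/
structure BundledGroup where
  carrier : Type
  [grp : Group carrier]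

attribute [instance] BundledGroup.grp

/-- If every subset `J` of the generators is singled out by an endomorphism fixing the generators
in `J` and killing the others, then the generators satisfy the intersection condition. -/
theorem closure_image_inf_closure_image_of_retractions {ι H : Type*} [Group H] (h : ι → H)
    (r : Set ι → H →* H) (fixes : ∀ J, ∀ i ∈ J, r J (h i) = h i)
    (kills : ∀ J, ∀ i ∉ J, r J (h i) = 1) (I J : Set ι) :
    Subgroup.closure (h '' I) ⊓ Subgroup.closure (h '' J) =
      Subgroup.closure (h '' (I ∩ J)) := by
  refine le_antisymm ?_ (le_inf (Subgroup.closure_mono (Set.image_mono Set.inter_subset_left))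
    (Subgroup.closure_mono (Set.image_mono Set.inter_subset_right)))
  rintro x ⟨hxI, hxJ⟩
  have hfix : Subgroup.closure (h '' J) ≤ (r J).eqLocus (MonoidHom.id H) := by
    rw [Subgroup.closure_le]
    rintro _ ⟨i, hi, rfl⟩
    exact fixes J i hi
  have hmap : Subgroup.closure (h '' I) ≤ (Subgroup.closure (h '' (I ∩ J))).comap (r J) := by
    rw [Subgroup.closure_le]
    rintro _ ⟨i, hi, rfl⟩
    change r J (h i) ∈ Subgroup.closure (h '' (I ∩ J))
    by_cases hiJ : i ∈ J
    · rw [fixes J i hiJ]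
      exact Subgroup.subset_closure ⟨i, ⟨hi, hiJ⟩, rfl⟩
    · rw [kills J i hiJ]
      exact one_mem _
  have hx : r J x = x := hfix hxJ
  have hr : r J x ∈ Subgroup.closure (h '' (I ∩ J)) := hmap hxI
  rwa [hx] at hr

/-- The generator `i` of the cover: indexed by subsets `I`, it is `(g i, -1)` in the coordinates
with `i ∈ I` and trivial elsewhere. -/
noncomputable def subsetGenerator {ι G : Type*} [Group G] (g : ι → G) (i : ι) :
    Set ι → G × ℤˣ :=
  open Classical in fun I => if i ∈ I then (g i, -1) else 1

/-- The endomorphism of the power indexed by subsets that reads coordinate `I ∩ J` in place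
of `I`. -/
def restrictSubset {ι A : Type*} [Group A] (J : Set ι) : (Set ι → A) →* (Set ι → A) where
  toFun x I := x (I ∩ J)
  map_one' := rfl
  map_mul' _ _ := rfl

theorem restrictSubset_subsetGenerator_of_mem {ι G : Type*} [Group G] (g : ι → G) (J : Set ι)
    (i : ι) (hi : i ∈ J) :
    restrictSubset J (subsetGenerator g i) = subsetGenerator g i := by
  funext I
  by_cases h : i ∈ I <;> simp [restrictSubset, subsetGenerator, hi, h]

theorem restrictSubset_subsetGenerator_of_notMem {ι G : Type*} [Group G] (g : ι → G) (J : Set ι)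
    (i : ι) (hi : i ∉ J) : restrictSubset J (subsetGenerator g i) = 1 := by
  funext I
  simp [restrictSubset, subsetGenerator, hi]

theorem subsetGenerator_sq {ι G : Type*} [Group G] (g : ι → G) (i : ι) (hi : g i ^ 2 = 1) :
    subsetGenerator g i ^ 2 = 1 := by
  funext I
  by_cases h : i ∈ I <;> simp [subsetGenerator, h, hi, Prod.ext_iff]

theorem subsetGenerator_ne_one {ι G : Type*} [Group G] (g : ι → G) (i : ι) :
    subsetGenerator g i ≠ 1 := by
  intro h
  have h1 := congrArg Prod.snd (congrFun h Set.univ)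
  simp only [subsetGenerator, Set.mem_univ, if_true, Pi.one_apply, Prod.snd_one] at h1
  exact absurd h1 (by decide)

theorem subsetGenerator_mul_sq {ι G : Type*} [Group G] (g : ι → G) (i j : ι)
    (hi : g i ^ 2 = 1) (hj : g j ^ 2 = 1) (hij : (g i * g j) ^ 2 = 1) :
    (subsetGenerator g i * subsetGenerator g j) ^ 2 = 1 := by
  funext I
  by_cases h : i ∈ I <;> by_cases h' : j ∈ I <;>
    simp [subsetGenerator, h, h', hi, hj, hij, Prod.ext_iff]

/-- **Every finite sggi is covered by a finite string C-group.** -/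
theorem finite_sggi_has_finite_stringCGroup_cover {n : ℕ} {G : Type} [Group G]
    [Finite G] (g : Fin n → G) (hG : IsSggi g) :
    ∃ (G' : BundledGroup) (g' : Fin n → G'.carrier),
      Finite G'.carrier ∧ IsStringCGroup g' ∧
      ∃ φ : G'.carrier →* G, Function.Surjective φ ∧ ∀ i, φ (g' i) = g i := by
  obtain ⟨hgen, hsq, hcomm⟩ := hG
  let p : Fin n → Set (Fin n) → G × ℤˣ := subsetGenerator g
  let S := Subgroup.closure (Set.range p)
  let q : Fin n → S := fun i => ⟨p i, Subgroup.subset_closure (Set.mem_range_self i)⟩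
  have hmap (I : Set (Fin n)) :
      (Subgroup.closure (q '' I)).map S.subtype = Subgroup.closure (p '' I) := by
    rw [MonoidHom.map_closure, Set.image_image]
    rfl
  let φ : S →* G :=
    ((MonoidHom.fst G ℤˣ).comp (Pi.evalMonoidHom _ Set.univ)).comp S.subtype
  have hφ (i : Fin n) : φ (q i) = g i := by
    simp [φ, q, p, subsetGenerator]
  refine ⟨⟨S⟩, q, inferInstanceAs (Finite S), ⟨⟨?_, ?_, ?_⟩, ?_, ?_⟩, φ, ?_, hφ⟩
  · apply Subgroup.map_injective S.subtype_injective
    rw [← Set.image_univ, hmap, Set.image_univ, ← MonoidHom.range_eq_map, S.range_subtype]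
  · exact fun i => Subtype.ext (subsetGenerator_sq g i (hsq i))
  · exact fun i j hij =>
      Subtype.ext (subsetGenerator_mul_sq g i j (hsq i) (hsq j) (hcomm i j hij))
  · exact fun i => orderOf_eq_prime (Subtype.ext (subsetGenerator_sq g i (hsq i)))
      fun h => subsetGenerator_ne_one g i (congrArg Subtype.val h)
  · intro I J
    apply Subgroup.map_injective S.subtype_injective
    rw [Subgroup.map_inf _ _ _ S.subtype_injective, hmap, hmap, hmap]
    exact closure_image_inf_closure_image_of_retractions p restrictSubset
      (restrictSubset_subsetGenerator_of_mem g) (restrictSubset_subsetGenerator_of_notMem g) I J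
  · rw [← MonoidHom.range_eq_top, eq_top_iff, ← hgen, Subgroup.closure_le]
    rintro _ ⟨i, rfl⟩
    exact ⟨q i, hφ i⟩
end

section
/- Every finite abstract n-polytope Q is covered by a finite regular abstract n-polytope R. That is, there exists a finite abstract n-polytope R whose automorphism group acts transitively on the set of flags of R, together with a covering η : R → Q. -/
/-- Two flags are `j`-adjacent (w.r.t. the rank function `rk`): they are distinct
and agree in every face whose rank is different from `j`. -/
def IsPolytopeAdj {P : Type*} [PartialOrder P] (rk : P → ℤ) (j : ℤ) (c d : Flag P) : Prop :=
  c ≠ d ∧ ∀ z : P, rk z ≠ j → (z ∈ c ↔ z ∈ d)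

/-- `P`, with strictly monotone rank function `rk` onto `{-1, 0, ..., n}`, is an
abstract polytope of rank `n`: it has a least and a greatest face, satisfies the
diamond condition and is strongly flag-connected. -/
structure IsAbstractPolytope {P : Type*} [PartialOrder P] (n : ℤ) (rk : P → ℤ) : Prop where
  neg_one_le : -1 ≤ n
  strictMono : ∀ {F G : P}, F < G → rk F < rk G
  rank_range : Set.range rk = Set.Icc (-1 : ℤ) n
  exists_bot : ∃ F₀ : P, ∀ F, F₀ ≤ F
  exists_top : ∃ Fn : P, ∀ F, F ≤ Fn
  diamond : ∀ F G : P, F < G → rk G = rk F + 2 →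
    ∃ H₁ H₂ : P, H₁ ≠ H₂ ∧ ∀ H : P, (F < H ∧ H < G) ↔ (H = H₁ ∨ H = H₂)
  strongly_connected : ∀ F G : P, F ≤ G →
    ∀ c d : Flag ↥(Set.Icc F G),
      Relation.ReflTransGen
        (fun c' d' => ∃ j : ℤ, IsPolytopeAdj (fun H => rk H.val) j c' d') c d

/-- A covering of polytopes: an order- and rank-preserving map sending flags to
flags and sending `j`-adjacent pairs of flags to `j`-adjacent pairs of flags. -/
def IsPolytopeCovering {R Q : Type*} [PartialOrder R] [PartialOrder Q]
    (rkR : R → ℤ) (rkQ : Q → ℤ) (η : R → Q) : Prop :=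
  Monotone η ∧ (∀ F : R, rkQ (η F) = rkR F) ∧
  (∀ c : Flag R, ∃ c' : Flag Q, η '' ↑c = ↑c') ∧
  (∀ (j : ℤ) (c d : Flag R) (c' d' : Flag Q), η '' ↑c = ↑c' → η '' ↑d = ↑d' →
    IsPolytopeAdj rkR j c d → IsPolytopeAdj rkQ j c' d')

/-- A polytope is regular if its automorphism group (order-preserving bijections)
acts transitively on the set of flags. -/
def IsRegularPolytope {P : Type*} [PartialOrder P] : Prop :=
  ∀ c d : Flag P, ∃ e : P ≃o P, e '' (↑c : Set P) = (↑d : Set P)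

/-- An abstract polytope of rank `n`, bundled with its carrier. -/
structure BundledPolytope (n : ℤ) where
  carrier : Type
  [po : PartialOrder carrier]
  rk : carrier → ℤ
  isPolytope : IsAbstractPolytope n rk

attribute [instance] BundledPolytope.po

lemma isMaxChain_of_strictMono {P α : Type*} [PartialOrder P] [Preorder α] {rk : P → α}
    (hrk : ∀ {F G : P}, F < G → rk F < rk G) {C : Set P} (hC : IsChain (· ≤ ·) C)
    (hit : ∀ F, ∃ G ∈ C, rk G = rk F) : IsMaxChain (· ≤ ·) C := by
  refine ⟨hC, fun D hD hCD => hCD.antisymm fun F hF => ?_⟩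
  obtain ⟨G, hG, he⟩ := hit F
  rcases hD.total hF (hCD hG) with hle | hle
  · rcases hle.eq_or_lt with rfl | hlt
    · exact hG
    · exact absurd he (hrk hlt).ne'
  · rcases hle.eq_or_lt with rfl | hlt
    · exact hG
    · exact absurd he (hrk hlt).ne

/-- A maximal chain of a poset with faces of rank `-1, …, n`, listed as an increasing sequence
which is constant from index `n + 1` on. -/
structure IsFlagSeq {Q : Type} [PartialOrder Q] (n : ℕ) (rk : Q → ℤ) (f : ℕ → Q) : Prop where
  mono : Monotone f
  rank : ∀ s, rk (f s) = (min s (n + 1) : ℕ) - 1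

/-- A family `ρ` of commuting-at-distance involutions generating `Γ`, supported on the indices
below `n`, such that deleting all generators from any index on is a well-defined endomorphism
of `Γ`. These retractions force the intersection property of a string C-group. -/
structure IsRetractiveString {Γ : Type} [Group Γ] (n : ℕ) (ρ : ℕ → Γ) : Prop where
  mul_self : ∀ i, ρ i * ρ i = 1
  commute : ∀ i j, i + 1 < j → Commute (ρ i) (ρ j)
  ne_one : ∀ i, i < n → ρ i ≠ 1
  eq_one : ∀ i, n ≤ i → ρ i = 1
  closure_range : Subgroup.closure (Set.range ρ) = ⊤
  retract : ∀ t, ∃ T : Γ →* Γ, ∀ l, T (ρ l) = if l + 1 < t then ρ l else 1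

namespace IsRetractiveString

open Subgroup

section Parabolic

variable {Γ : Type} [Group Γ] (ρ : ℕ → Γ)

/-- The subgroup generated by the `ρ l` with `l + 1 < t`. -/
def lo (t : ℕ) : Subgroup Γ := closure (ρ '' {l | l + 1 < t})

/-- The subgroup generated by the `ρ l` with `s ≤ l`. -/
def hi (s : ℕ) : Subgroup Γ := closure (ρ '' {l | s ≤ l})

/-- The subgroup generated by the `ρ l` with `s ≤ l` and `l + 1 < t`. -/
def mid (s t : ℕ) : Subgroup Γ := closure (ρ '' {l | s ≤ l ∧ l + 1 < t})

variable {ρ}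

lemma mem_lo {l t : ℕ} (h : l + 1 < t) : ρ l ∈ lo ρ t := subset_closure ⟨l, h, rfl⟩

lemma mem_hi {l s : ℕ} (h : s ≤ l) : ρ l ∈ hi ρ s := subset_closure ⟨l, h, rfl⟩

lemma lo_mono {s t : ℕ} (h : s ≤ t) : lo ρ s ≤ lo ρ t :=
  closure_mono (Set.image_mono fun _ hl => lt_of_lt_of_le hl h)

lemma hi_anti {s t : ℕ} (h : s ≤ t) : hi ρ t ≤ hi ρ s :=
  closure_mono (Set.image_mono fun _ hl => le_trans h hl)

lemma mid_le_hi (s t : ℕ) : mid ρ s t ≤ hi ρ s :=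
  closure_mono (Set.image_mono fun _ hl => hl.1)

lemma mid_le_lo (s t : ℕ) : mid ρ s t ≤ lo ρ t :=
  closure_mono (Set.image_mono fun _ hl => hl.2)

end Parabolic

variable {Γ : Type} [Group Γ] {n : ℕ} {ρ : ℕ → Γ}

lemma commute_hi_lo (h : IsRetractiveString n ρ) {s : ℕ} {x y : Γ} (hx : x ∈ hi ρ s) (hy : y ∈ lo ρ s) : x * y = y * x := by
  have hle : lo ρ s ≤ centralizer (hi ρ s : Set Γ) := by
    rw [lo, closure_le]
    rintro _ ⟨l, hl, rfl⟩
    have : hi ρ s ≤ centralizer {ρ l} := by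
      rw [hi, closure_le]
      rintro _ ⟨k, hk, rfl⟩
      rw [SetLike.mem_coe, mem_centralizer_singleton_iff]
      exact (h.commute l k (lt_of_lt_of_le hl hk)).symm.eq
    intro z hz
    have := this hz
    rw [mem_centralizer_singleton_iff] at this
    exact this
  exact hle hy x hx

lemma mem_mid (h : IsRetractiveString n ρ) {s t : ℕ} {x : Γ} (hx : x ∈ hi ρ s) (hx' : x ∈ lo ρ t) : x ∈ mid ρ s t := by
  obtain ⟨T, hT⟩ := h.retract t
  have h1 : hi ρ s ≤ (mid ρ s t).comap T := by
    rw [hi, closure_le]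
    rintro _ ⟨l, hl, rfl⟩
    rw [SetLike.mem_coe, mem_comap, hT]
    split_ifs with hlt
    · exact subset_closure ⟨l, ⟨hl, hlt⟩, rfl⟩
    · exact one_mem _
  have h2 : lo ρ t ≤ T.eqLocus (MonoidHom.id Γ) := by
    rw [lo, closure_le]
    rintro _ ⟨l, hl, rfl⟩
    exact (hT l).trans (if_pos hl)
  have h3 : T x = x := h2 hx'
  rw [← h3]
  exact h1 hx

lemma hi_zero (h : IsRetractiveString n ρ) : hi ρ 0 = ⊤ := by
  rw [← h.closure_range, hi]
  congr 1
  ext; simp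

lemma lo_succ (h : IsRetractiveString n ρ) : lo ρ (n + 1) = ⊤ := by
  rw [eq_top_iff, ← h.closure_range, closure_le]
  rintro _ ⟨l, rfl⟩
  by_cases hl : l < n
  · exact mem_lo (by omega)
  · rw [h.eq_one l (by omega)]
    exact one_mem _

lemma ne_hi_mul_lo (h : IsRetractiveString n ρ) {s : ℕ} (hs : s < n) {x y : Γ} (hx : x ∈ hi ρ (s + 1))
    (hy : y ∈ lo ρ (s + 1)) : ρ s ≠ x * y := by
  intro heq
  have hmid : mid ρ (s + 1) (s + 2) = ⊥ := by
    rw [mid, closure_eq_bot_iff]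
    rintro _ ⟨l, hl, -⟩
    exact absurd hl.1 (by have := hl.2; omega)
  have hmid' : mid ρ s (s + 1) = ⊥ := by
    rw [mid, closure_eq_bot_iff]
    rintro _ ⟨l, hl, -⟩
    exact absurd hl.1 (by have := hl.2; omega)
  have hx1 : x ∈ mid ρ (s + 1) (s + 2) := h.mem_mid hx (by
    rw [← mul_inv_eq_iff_eq_mul] at heq
    rw [← heq]
    exact mul_mem (mem_lo (by omega)) (inv_mem (lo_mono (by omega) hy)))
  rw [hmid, mem_bot] at hx1
  rw [hx1, one_mul] at heq
  have hy1 : ρ s ∈ mid ρ s (s + 1) := h.mem_mid (mem_hi le_rfl) (heq ▸ hy)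
  rw [hmid', mem_bot] at hy1
  exact h.ne_one s hs hy1

variable (h : IsRetractiveString n ρ)

/-- Representatives of the faces of the coset poset of `ρ`: a level and a group element. -/
structure PreFace (_ : IsRetractiveString n ρ) where
  /-- the level of the face, one more than its rank -/
  level : ℕ
  level_le : level ≤ n + 1
  /-- a coset representative -/
  elt : Γ

instance : Preorder (PreFace h) where
  le F G := F.level ≤ G.level ∧
    ∃ x ∈ hi ρ F.level, ∃ y ∈ lo ρ G.level, G.elt = F.elt * (x * y)
  le_refl F := ⟨le_rfl, 1, one_mem _, 1, one_mem _, by simp⟩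
  le_trans := by
    rintro F G K ⟨hFG, x, hx, y, hy, hG⟩ ⟨hGK, x', hx', y', hy', hK⟩
    refine ⟨hFG.trans hGK, x * x', mul_mem hx (hi_anti hFG hx'), y * y',
      mul_mem (lo_mono hGK hy) hy', ?_⟩
    have := h.commute_hi_lo hx' hy
    rw [hK, hG]
    simp only [mul_assoc]
    rw [← mul_assoc y x', ← this, mul_assoc]

/-- The coset poset of `ρ`. -/
def Face (h : IsRetractiveString n ρ) : Type := Antisymmetrization (PreFace h) (· ≤ ·)

instance : PartialOrder (Face h) := inferInstanceAs (PartialOrder (Antisymmetrization _ _))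

/-- The face of level `s` through the group element `a`. -/
def face (s : ℕ) (hs : s ≤ n + 1) (a : Γ) : Face h := toAntisymmetrization (· ≤ ·) ⟨s, hs, a⟩

variable {h}

lemma face_le_face {s t : ℕ} {hs : s ≤ n + 1} {ht : t ≤ n + 1} {a b : Γ} :
    face h s hs a ≤ face h t ht b ↔ s ≤ t ∧ ∃ x ∈ hi ρ s, ∃ y ∈ lo ρ t, b = a * (x * y) :=
  Iff.rfl

lemma face_le_face_self {s t : ℕ} {hs : s ≤ n + 1} {ht : t ≤ n + 1} {a : Γ} (hst : s ≤ t) :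
    face h s hs a ≤ face h t ht a :=
  face_le_face.2 ⟨hst, 1, one_mem _, 1, one_mem _, by simp⟩

lemma exists_eq_face (F : Face h) : ∃ s hs a, F = face h s hs a := by
  induction F using Antisymmetrization.ind with
  | _ F => exact ⟨F.level, F.level_le, F.elt, rfl⟩

/-- The level of a face, one more than its rank. -/
def level : Face h → ℕ :=
  Quotient.lift PreFace.level fun _ _ hab => le_antisymm hab.1.1 hab.2.1

@[simp] lemma level_face {s : ℕ} {hs : s ≤ n + 1} {a : Γ} : level (face h s hs a) = s := rfl

lemma level_le (F : Face h) : level F ≤ n + 1 := by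
  obtain ⟨s, hs, a, rfl⟩ := exists_eq_face F
  exact hs

lemma level_mono {F G : Face h} (hFG : F ≤ G) : level F ≤ level G := by
  obtain ⟨s, hs, a, rfl⟩ := exists_eq_face F
  obtain ⟨t, ht, b, rfl⟩ := exists_eq_face G
  exact (face_le_face.1 hFG).1

lemma face_mul_eq {s : ℕ} {hs : s ≤ n + 1} {a x y : Γ} (hx : x ∈ hi ρ s) (hy : y ∈ lo ρ s) :
    face h s hs (a * (x * y)) = face h s hs a := by
  apply le_antisymm
  · refine face_le_face.2 ⟨le_rfl, x⁻¹, inv_mem hx, y⁻¹, inv_mem hy, ?_⟩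
    rw [h.commute_hi_lo (inv_mem hx) (inv_mem hy)]
    group
  · exact face_le_face.2 ⟨le_rfl, x, hx, y, hy, rfl⟩

lemma face_mul_hi {s : ℕ} {hs : s ≤ n + 1} {a x : Γ} (hx : x ∈ hi ρ s) :
    face h s hs (a * x) = face h s hs a := by
  simpa using face_mul_eq (h := h) (a := a) (hs := hs) hx (one_mem _)

lemma face_mul_lo {s : ℕ} {hs : s ≤ n + 1} {a y : Γ} (hy : y ∈ lo ρ s) :
    face h s hs (a * y) = face h s hs a := by
  simpa using face_mul_eq (h := h) (a := a) (hs := hs) (one_mem _) hy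

lemma face_mul_gen {s l : ℕ} {hs : s ≤ n + 1} {a : Γ} (hl : s ≠ l + 1) :
    face h s hs (a * ρ l) = face h s hs a := by
  rcases lt_or_gt_of_ne hl with hl | hl
  · exact face_mul_hi (mem_hi (by omega))
  · exact face_mul_lo (mem_lo hl)

lemma eq_of_le_of_level {F G : Face h} (hFG : F ≤ G) (hl : level F = level G) : F = G := by
  obtain ⟨s, hs, a, rfl⟩ := exists_eq_face F
  obtain ⟨t, ht, b, rfl⟩ := exists_eq_face G
  obtain rfl : s = t := hl
  obtain ⟨-, x, hx, y, hy, rfl⟩ := face_le_face.1 hFG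
  exact (face_mul_eq hx hy).symm

lemma level_strictMono {F G : Face h} (hFG : F < G) : level F < level G :=
  lt_of_le_of_ne (level_mono hFG.le) fun he => hFG.ne (eq_of_le_of_level hFG.le he)

lemma face_mul_gen_ne {s : ℕ} {hs : s + 1 ≤ n + 1} (hsn : s < n) {a : Γ} :
    face h (s + 1) hs (a * ρ s) ≠ face h (s + 1) hs a := by
  intro he
  obtain ⟨-, x, hx, y, hy, hxy⟩ := face_le_face.1 he.ge
  exact h.ne_hi_mul_lo hsn hx hy (mul_left_cancel hxy)

instance [Finite Γ] : Finite (Face h) := by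
  refine Finite.of_surjective (fun p : Fin (n + 2) × Γ => face h p.1 (by omega) p.2) fun F => ?_
  obtain ⟨s, hs, a, rfl⟩ := exists_eq_face F
  exact ⟨(⟨s, by omega⟩, a), rfl⟩

/-- Every chain of the coset poset runs through a single group element. -/
lemma exists_elt_of_isChain [Finite Γ] {C : Set (Face h)} (hC : IsChain (· ≤ ·) C) :
    ∃ a, ∀ F ∈ C, F = face h (level F) (level_le F) a := by
  classical
  obtain ⟨S, rfl⟩ := C.toFinite.exists_finset_coe
  revert hC
  refine Finset.induction_on_max_value level S (fun _ => ⟨1, by simp⟩) ?_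
  intro G S hG hmax ih hC
  obtain ⟨a, ha⟩ := ih (hC.mono (by simp))
  obtain ⟨t, ht, b, rfl⟩ := exists_eq_face G
  rcases S.eq_empty_or_nonempty with rfl | hne
  · exact ⟨b, by simp⟩
  obtain ⟨F, hF, hFmax⟩ := S.exists_max_image level hne
  have hFG : F ≤ face h t ht b := by
    rcases hC.total (by simp [hF] : F ∈ _) (by simp : face h t ht b ∈ _) with hle | hle
    · exact hle
    · exact (eq_of_le_of_level hle (le_antisymm (level_mono hle) (hmax F hF))).ge
  rw [ha F hF] at hFG
  obtain ⟨-, x, hx, y, hy, rfl⟩ := face_le_face.1 hFG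
  refine ⟨a * x, fun K hK => ?_⟩
  rcases Finset.mem_insert.1 (Finset.mem_coe.1 hK) with rfl | hK
  · change face h t ht (a * (x * y)) = face h t ht (a * x)
    rw [← mul_assoc, face_mul_lo hy]
  · rw [face_mul_hi (hi_anti (hFmax K hK) hx)]
    exact ha K hK

/-- Two group elements giving the same faces at levels `s ≤ t` differ, as far as the levels in
between are concerned, by an element of the subgroup generated by the `ρ l`, `s ≤ l < t - 1`. -/
lemma exists_mid {s t : ℕ} {hs : s ≤ n + 1} {ht : t ≤ n + 1} {a b : Γ} (hst : s ≤ t)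
    (h1 : face h s hs a = face h s hs b) (h2 : face h t ht a = face h t ht b) :
    ∃ d ∈ mid ρ s t, ∀ u (hu : u ≤ n + 1), s ≤ u → u ≤ t → face h u hu b = face h u hu (a * d) := by
  obtain ⟨-, y, hy, x, hx, hb⟩ := face_le_face.1 h1.le
  obtain ⟨-, w, hw, z, hz, hb'⟩ := face_le_face.1 h2.le
  have e1 := h.commute_hi_lo hy hx
  have e2 := h.commute_hi_lo hw hz
  have e3 : x * y = z * w := by
    rw [← e1, ← e2]
    exact mul_left_cancel (hb.symm.trans hb')
  have e4 : y * w⁻¹ = x⁻¹ * z := by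
    rw [mul_inv_eq_iff_eq_mul, mul_assoc, ← e3]
    simp
  have hd : y * w⁻¹ ∈ hi ρ s := mul_mem hy (inv_mem (hi_anti hst hw))
  refine ⟨y * w⁻¹, h.mem_mid hd (e4 ▸ mul_mem (inv_mem (lo_mono hst hx)) hz), ?_⟩
  intro u hu hsu hut
  have e5 := h.commute_hi_lo hd hx
  have : b = a * (y * w⁻¹) * x * w := by
    rw [hb, e1, mul_assoc a, e5]
    group
  rw [this, face_mul_hi (hi_anti hut hw), face_mul_lo (lo_mono hsu hx)]

/-- Left multiplication on representatives of faces. -/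
def PreFace.translate (g : Γ) : PreFace h →o PreFace h where
  toFun F := ⟨F.level, F.level_le, g * F.elt⟩
  monotone' := by
    rintro F G ⟨hFG, x, hx, y, hy, hG⟩
    exact ⟨hFG, x, hx, y, hy, by simp only [hG, mul_assoc]⟩

/-- Left multiplication, as an automorphism of the coset poset. -/
def translate (g : Γ) : Face h ≃o Face h where
  toFun := (PreFace.translate g).antisymmetrization
  invFun := (PreFace.translate g⁻¹).antisymmetrization
  left_inv F := by
    obtain ⟨s, hs, a, rfl⟩ := exists_eq_face F
    exact congrArg (face h s hs) (inv_mul_cancel_left g a)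
  right_inv F := by
    obtain ⟨s, hs, a, rfl⟩ := exists_eq_face F
    exact congrArg (face h s hs) (mul_inv_cancel_left g a)
  map_rel_iff' := by
    intro F G
    obtain ⟨s, hs, a, rfl⟩ := exists_eq_face F
    obtain ⟨t, ht, b, rfl⟩ := exists_eq_face G
    change (s ≤ t ∧ ∃ x ∈ hi ρ s, ∃ y ∈ lo ρ t, g * b = g * a * (x * y)) ↔
      (s ≤ t ∧ ∃ x ∈ hi ρ s, ∃ y ∈ lo ρ t, b = a * (x * y))
    simp [mul_assoc]

lemma translate_face {s : ℕ} {hs : s ≤ n + 1} {g a : Γ} :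
    translate g (face h s hs a) = face h s hs (g * a) := rfl

lemma isChain_faces (a : Γ) :
    IsChain (· ≤ ·) {F : Face h | F = face h (level F) (level_le F) a} := by
  intro F hF G hG _
  rw [hF, hG]
  exact (le_total (level F) (level G)).imp face_le_face_self face_le_face_self

lemma exists_elt_of_flag [Finite Γ] (c : Flag (Face h)) :
    ∃ a, ∀ F, F ∈ c ↔ F = face h (level F) (level_le F) a := by
  obtain ⟨a, ha⟩ := exists_elt_of_isChain c.chain_le
  exact ⟨a, fun F => Set.ext_iff.1 (c.max_chain' (isChain_faces a) ha) F⟩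

/-- Faces lying between two faces through a common group element, one level above the lower and
one level below the upper one. -/
lemma eq_or_eq_of_between [Finite Γ] {s : ℕ} (hs : s + 2 ≤ n + 1) {a : Γ} {H : Face h}
    (h1 : face h s (by omega) a ≤ H) (h2 : H ≤ face h (s + 2) hs a) (hH : level H = s + 1) :
    H = face h (s + 1) (by omega) a ∨ H = face h (s + 1) (by omega) (a * ρ s) := by
  have hC : IsChain (· ≤ ·) {face h s (by omega) a, H, face h (s + 2) hs a} := by
    refine IsChain.insert (IsChain.pair ?_) ?_
    · exact h2
    · rintro b (rfl | rfl) -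
      · exact Or.inl h1
      · exact Or.inl (h1.trans h2)
  obtain ⟨b, hb⟩ := exists_elt_of_isChain hC
  obtain ⟨d, hd, hd'⟩ := exists_mid (h := h) (s := s) (t := s + 2) (by omega)
    (hb (face h s (by omega) a) (by simp)) (hb (face h (s + 2) hs a) (by simp))
  have key : d = 1 ∨ d = ρ s := by
    clear hd'
    induction hd using closure_induction with
    | mem x hx =>
      obtain ⟨l, hl, rfl⟩ := hx
      simp only [Set.mem_ofPred_eq] at hl
      exact Or.inr (by rw [show l = s by omega])
    | one => exact Or.inl rfl
    | mul x y _ _ hx hy =>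
      rcases hx with rfl | rfl <;> rcases hy with rfl | rfl <;> simp [h.mul_self]
    | inv x _ hx =>
      rcases hx with rfl | rfl
      · simp
      · exact Or.inr (inv_eq_of_mul_eq_one_left (h.mul_self s))
  have hHb : H = face h (s + 1) (by omega) b := by
    have hHb := hb H (by simp)
    simp only [hH] at hHb
    exact hHb
  have hHd := hHb.trans (hd' (s + 1) (by omega) (by omega) (by omega))
  rcases key with rfl | rfl
  · exact Or.inl (by rwa [mul_one] at hHd)
  · exact Or.inr hHd

/-- The flag of the section `G / F` through a group element. -/
def sectionFlag {F G : Face h} (a : Γ) (hF : F = face h (level F) (level_le F) a)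
    (hG : G = face h (level G) (level_le G) a) : Flag (Set.Icc F G) :=
  Flag.ofIsMaxChain {H | H.1 = face h (level H.1) (level_le H.1) a} <| by
    refine isMaxChain_of_strictMono (rk := fun H => level H.1) (fun hlt => level_strictMono hlt)
      (fun H hH K hK hne => isChain_faces a hH hK fun he => hne (Subtype.ext he)) ?_
    intro H
    refine ⟨⟨face h (level H.1) (level_le H.1) a, ?_, ?_⟩, rfl, rfl⟩
    · exact hF.le.trans (face_le_face_self (level_mono H.2.1))
    · exact (face_le_face_self (level_mono H.2.2)).trans hG.ge

lemma mem_sectionFlag {F G : Face h} {a : Γ} {hF : F = face h (level F) (level_le F) a}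
    {hG : G = face h (level G) (level_le G) a} {H : Set.Icc F G} :
    H ∈ sectionFlag a hF hG ↔ H.1 = face h (level H.1) (level_le H.1) a := Iff.rfl

lemma exists_eq_sectionFlag [Finite Γ] {F G : Face h} (hFG : F ≤ G) (c : Flag (Set.Icc F G)) :
    ∃ a hF hG, c = sectionFlag a hF hG := by
  have hC : IsChain (· ≤ ·) (insert F (insert G (Subtype.val '' (c : Set (Set.Icc F G))))) := by
    refine IsChain.insert (IsChain.insert ?_ ?_) ?_
    · rintro _ ⟨H, hH, rfl⟩ _ ⟨K, hK, rfl⟩ -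
      exact c.le_or_le hH hK
    · rintro _ ⟨H, -, rfl⟩ -
      exact Or.inr H.2.2
    · rintro _ (rfl | ⟨H, -, rfl⟩) -
      · exact Or.inl hFG
      · exact Or.inl H.2.1
  obtain ⟨a, ha⟩ := exists_elt_of_isChain hC
  refine ⟨a, ha F (by simp), ha G (by simp), ?_⟩
  refine Flag.ext (c.max_chain' (Flag.chain_le _) fun H hH => ha H.1 ?_)
  exact Or.inr (Or.inr ⟨H, hH, rfl⟩)

/-- The rank of a face. -/
def rank (F : Face h) : ℤ := level F - 1

lemma reflTransGen_sectionFlag {F G : Face h} {a d : Γ}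
    (hF : F = face h (level F) (level_le F) a) (hG : G = face h (level G) (level_le G) a)
    (hd : d ∈ mid ρ (level F) (level G)) (hF' : F = face h (level F) (level_le F) (a * d))
    (hG' : G = face h (level G) (level_le G) (a * d)) :
    Relation.ReflTransGen
      (fun c d => ∃ j : ℤ, IsPolytopeAdj (fun H : Set.Icc F G => rank H.1) j c d)
      (sectionFlag a hF hG) (sectionFlag (a * d) hF' hG') := by
  have step : ∀ (b : Γ) (l : ℕ) hF₁ hG₁ hF₂ hG₂, Relation.ReflTransGen
      (fun c d => ∃ j : ℤ, IsPolytopeAdj (fun H : Set.Icc F G => rank H.1) j c d)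
      (sectionFlag b hF₁ hG₁) (sectionFlag (b * ρ l) hF₂ hG₂) := by
    intro b l hF₁ hG₁ hF₂ hG₂
    by_cases he : sectionFlag b hF₁ hG₁ = sectionFlag (b * ρ l) hF₂ hG₂
    · rw [he]
    · refine Relation.ReflTransGen.single ⟨l, he, fun H hH => ?_⟩
      have hH' : level H.1 ≠ l + 1 := fun hl => hH (by simp [rank, hl])
      rw [mem_sectionFlag, mem_sectionFlag, face_mul_gen hH']
  induction hd using closure_induction_right with
  | one =>
    simp only [mul_one]
    exact Relation.ReflTransGen.refl
  | mul_right x hx y hy ih =>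
    obtain ⟨l, hl, rfl⟩ := hy
    have hx1 : F = face h (level F) (level_le F) (a * x) := by
      rwa [face_mul_hi (mid_le_hi _ _ hx)]
    have hx2 : G = face h (level G) (level_le G) (a * x) := by
      rwa [face_mul_lo (mid_le_lo _ _ hx)]
    refine (ih hx1 hx2).trans ?_
    simp only [← mul_assoc]
    exact step _ _ _ _ _ _
  | mul_inv_cancel x hx y hy ih =>
    obtain ⟨l, hl, rfl⟩ := hy
    have hx1 : F = face h (level F) (level_le F) (a * x) := by
      rwa [face_mul_hi (mid_le_hi _ _ hx)]
    have hx2 : G = face h (level G) (level_le G) (a * x) := by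
      rwa [face_mul_lo (mid_le_lo _ _ hx)]
    refine (ih hx1 hx2).trans ?_
    simp only [← mul_assoc, inv_eq_of_mul_eq_one_left (h.mul_self l)]
    exact step _ _ _ _ _ _

variable (h) in
lemma isAbstractPolytope [Finite Γ] : IsAbstractPolytope (n : ℤ) (rank (h := h)) where
  neg_one_le := by omega
  strictMono hFG := by
    have := level_strictMono hFG
    simp only [rank]
    omega
  rank_range := by
    ext z
    simp only [Set.mem_range, Set.mem_Icc]
    constructor
    · rintro ⟨F, rfl⟩
      have := level_le F
      simp only [rank]
      omega
    · rintro ⟨h1, h2⟩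
      refine ⟨face h (z + 1).toNat (by omega) 1, ?_⟩
      simp only [rank, level_face]
      omega
  exists_bot := by
    refine ⟨face h 0 (by omega) 1, fun F => ?_⟩
    obtain ⟨s, hs, a, rfl⟩ := exists_eq_face F
    exact face_le_face.2 ⟨by omega, a, by simp [h.hi_zero], 1, one_mem _, by simp⟩
  exists_top := by
    refine ⟨face h (n + 1) le_rfl 1, fun F => ?_⟩
    obtain ⟨s, hs, a, rfl⟩ := exists_eq_face F
    exact face_le_face.2 ⟨by omega, 1, one_mem _, a⁻¹, by simp [h.lo_succ], by simp⟩
  diamond F G hFG hr := by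
    obtain ⟨a, ha⟩ := exists_elt_of_isChain (IsChain.pair hFG.le)
    have hF := ha F (by simp)
    have hG := ha G (by simp)
    have hl : level G = level F + 2 := by
      simp only [rank] at hr
      omega
    have hn := level_le G
    generalize level_le F = p at hF
    generalize level_le G = q at hG
    generalize level F = s at *
    generalize level G = t at *
    subst hF hG hl
    refine ⟨face h (s + 1) (by omega) a, face h (s + 1) (by omega) (a * ρ s),
      (face_mul_gen_ne (by omega)).symm, fun H => ⟨?_, ?_⟩⟩
    · rintro ⟨h1, h2⟩
      have h3 := level_strictMono h1
      have h4 := level_strictMono h2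
      simp only [level_face] at h3 h4
      exact eq_or_eq_of_between _ h1.le h2.le (by omega)
    · have hlt : ∀ b, face h s p b < face h (s + 1) (by omega) b ∧
          face h (s + 1) (by omega) b < face h (s + 2) q b := fun b =>
        ⟨(face_le_face_self (by omega)).lt_of_ne fun he => by simpa using congrArg level he,
          (face_le_face_self (by omega)).lt_of_ne fun he => by simpa using congrArg level he⟩
      rintro (rfl | rfl)
      · exact hlt a
      · have := hlt (a * ρ s)
        rwa [face_mul_gen (by omega), face_mul_gen (s := s + 2) (by omega)] at this
  strongly_connected F G hFG c d := by
    obtain ⟨a, hF, hG, rfl⟩ := exists_eq_sectionFlag hFG c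
    obtain ⟨b, hF', hG', rfl⟩ := exists_eq_sectionFlag hFG d
    obtain ⟨e, he, hbe⟩ := exists_mid (level_mono hFG) (hF.symm.trans hF') (hG.symm.trans hG')
    have hF₁ := hF'.trans (hbe _ _ le_rfl (level_mono hFG))
    have hG₁ := hG'.trans (hbe _ _ (level_mono hFG) le_rfl)
    have : sectionFlag b hF' hG' = sectionFlag (a * e) hF₁ hG₁ := by
      ext H
      exact iff_of_eq (congrArg (H.1 = ·) (hbe _ _ (level_mono H.2.1) (level_mono H.2.2)))
    rw [this]
    exact reflTransGen_sectionFlag hF hG he hF₁ hG₁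

variable (h) in
lemma isRegularPolytope [Finite Γ] : IsRegularPolytope (P := Face h) := by
  intro c d
  obtain ⟨a, ha⟩ := exists_elt_of_flag c
  obtain ⟨b, hb⟩ := exists_elt_of_flag d
  refine ⟨translate (b * a⁻¹), ?_⟩
  ext F
  constructor
  · rintro ⟨G, hG, rfl⟩
    rw [(ha G).1 hG, translate_face, inv_mul_cancel_right]
    exact (hb _).2 rfl
  · intro hF
    refine ⟨face h (level F) (level_le F) a, (ha _).2 rfl, ?_⟩
    rw [translate_face, inv_mul_cancel_right]
    exact ((hb F).1 hF).symm

section Covering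

variable {Q : Type} {v : Γ → ℕ → Q}

lemma apply_mul_eq (hv : ∀ a s l, s ≠ l + 1 → v (a * ρ l) s = v a s)
    (hρ : ∀ i, ρ i * ρ i = 1) {s : ℕ} {L : Set ℕ} (hL : ∀ l ∈ L, s ≠ l + 1) {a x : Γ}
    (hx : x ∈ closure (ρ '' L)) : v (a * x) s = v a s := by
  induction hx using closure_induction_right with
  | one => rw [mul_one]
  | mul_right x hx y hy ih =>
    obtain ⟨l, hl, rfl⟩ := hy
    rw [← mul_assoc, hv _ _ _ (hL l hl), ih]
  | mul_inv_cancel x hx y hy ih =>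
    obtain ⟨l, hl, rfl⟩ := hy
    rw [inv_eq_of_mul_eq_one_left (hρ l), ← mul_assoc, hv _ _ _ (hL l hl), ih]

lemma apply_mul_hi (h : IsRetractiveString n ρ) (hv : ∀ a s l, s ≠ l + 1 → v (a * ρ l) s = v a s)
    {s : ℕ} {a x : Γ} (hx : x ∈ hi ρ s) : v (a * x) s = v a s :=
  apply_mul_eq hv h.mul_self (fun _ hl => (Nat.lt_succ_of_le hl).ne) hx

lemma apply_mul_lo (h : IsRetractiveString n ρ) (hv : ∀ a s l, s ≠ l + 1 → v (a * ρ l) s = v a s)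
    {s : ℕ} {a x : Γ} (hx : x ∈ lo ρ s) : v (a * x) s = v a s :=
  apply_mul_eq hv h.mul_self (fun _ hl => ne_of_gt hl) hx

/-- The map of the coset poset induced by an assignment of sequences to group elements. -/
def cover (h : IsRetractiveString n ρ) (v : Γ → ℕ → Q)
    (hv : ∀ a s l, s ≠ l + 1 → v (a * ρ l) s = v a s) : Face h → Q :=
  Quotient.lift (fun F : PreFace h => v F.elt F.level) <| by
    rintro ⟨s, hs, a⟩ ⟨t, ht, b⟩ ⟨⟨hst, x, hx, y, hy, hb⟩, ⟨hts, -⟩⟩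
    obtain rfl : s = t := le_antisymm hst hts
    simp only at hb hx hy ⊢
    rw [hb, ← mul_assoc, apply_mul_lo h hv hy, apply_mul_hi h hv hx]

lemma cover_face {hv : ∀ a s l, s ≠ l + 1 → v (a * ρ l) s = v a s} {s : ℕ} {hs : s ≤ n + 1}
    {a : Γ} : cover h v hv (face h s hs a) = v a s := rfl

variable [PartialOrder Q] {rkQ : Q → ℤ}

lemma cover_monotone (hv : ∀ a s l, s ≠ l + 1 → v (a * ρ l) s = v a s)
    (hmono : ∀ a, Monotone (v a)) : Monotone (cover h v hv) := by
  intro F G hFG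
  obtain ⟨s, hs, a, rfl⟩ := exists_eq_face F
  obtain ⟨t, ht, b, rfl⟩ := exists_eq_face G
  obtain ⟨hst, x, hx, y, hy, rfl⟩ := face_le_face.1 hFG
  rw [cover_face, cover_face, ← mul_assoc, apply_mul_lo h hv hy, ← apply_mul_hi h hv hx]
  exact hmono _ hst

/-- Adjacent flags of the coset poset differ by a single generator. -/
lemma exists_gen_of_adj [Finite Γ] {j : ℤ} {c d : Flag (Face h)} (hcd : IsPolytopeAdj rank j c d) :
    ∃ (a : Γ) (s : ℕ) (hs : s < n), face h (s + 1) (by omega) a ∈ c ∧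
      face h (s + 1) (by omega) (a * ρ s) ∈ d := by
  obtain ⟨hne, hj⟩ := hcd
  obtain ⟨x, hxc, hxd⟩ : ∃ x ∈ c, x ∉ d := by
    by_contra! hall
    exact hne (Flag.ext (c.max_chain' d.chain_le hall))
  have hx : rank x = j := by
    by_contra hx
    exact hxd ((hj x hx).1 hxc)
  obtain ⟨a, ha⟩ := exists_elt_of_flag c
  obtain ⟨b, hb⟩ := exists_elt_of_flag d
  have hxa := (ha x).1 hxc
  have hac : ∀ u hu, face h u hu a ∈ c := fun u hu => (ha _).2 rfl
  have hbd : ∀ u hu, face h u hu b ∈ d := fun u hu => (hb _).2 rfl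
  have hab : ∀ u hu, u ≠ level x → face h u hu a = face h u hu b := by
    intro u hu hne
    refine (hb _).1 ((hj _ ?_).1 (hac u hu))
    rw [← hx]
    simp only [rank, level_face]
    omega
  have hneq : ∀ hu, face h (level x) hu b ≠ face h (level x) hu a := by
    intro hu he
    exact hxd (hxa ▸ he ▸ hbd _ _)
  have hxn := level_le x
  clear hxa
  generalize level x = s at *
  have hba : b = a * (a⁻¹ * b) := by group
  obtain _ | s := s
  · refine absurd ?_ (hneq hxn)
    rw [hba]
    exact face_mul_hi (by simp [h.hi_zero])
  by_cases hs : s < n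
  · refine ⟨a, s, hs, hac _ _, ?_⟩
    have h1 : face h s (by omega) a ≤ face h (s + 1) hxn b :=
      (hab s (by omega) (by omega)).le.trans (face_le_face_self (by omega))
    have h2 : face h (s + 1) hxn b ≤ face h (s + 2) (by omega) a :=
      (face_le_face_self (by omega)).trans (hab (s + 2) (by omega) (by omega)).ge
    rcases eq_or_eq_of_between _ h1 h2 rfl with he | he
    · exact absurd he (hneq hxn)
    · exact he ▸ hbd _ _
  · refine absurd ?_ (hneq hxn)
    obtain rfl : s = n := by omega
    rw [hba]
    exact face_mul_lo (by simp [h.lo_succ])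

lemma isPolytopeCovering_cover [Finite Γ] (hQ : IsAbstractPolytope (n : ℤ) rkQ)
    (hv : ∀ a s l, s ≠ l + 1 → v (a * ρ l) s = v a s)
    (hv' : ∀ a s, s < n → v (a * ρ s) (s + 1) ≠ v a (s + 1))
    (hflag : ∀ a, IsFlagSeq n rkQ (v a)) :
    IsPolytopeCovering rank rkQ (cover h v hv) := by
  have hmono := cover_monotone (h := h) hv fun a => (hflag a).mono
  have hrank : ∀ F : Face h, rkQ (cover h v hv F) = rank F := by
    intro F
    obtain ⟨s, hs, a, rfl⟩ := exists_eq_face F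
    rw [cover_face, (hflag a).rank, min_eq_left hs]
    rfl
  refine ⟨hmono, hrank, fun c => ?_, ?_⟩
  · obtain ⟨a, ha⟩ := exists_elt_of_flag c
    refine ⟨Flag.ofIsMaxChain _ (isMaxChain_of_strictMono hQ.strictMono ?_ ?_), rfl⟩
    · rintro _ ⟨F, hF, rfl⟩ _ ⟨G, hG, rfl⟩ -
      exact (c.le_or_le hF hG).imp (fun hle => hmono hle) (fun hle => hmono hle)
    · intro F
      have hF : rkQ F ∈ Set.Icc (-1 : ℤ) n := hQ.rank_range ▸ Set.mem_range_self F
      have := hF.1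
      have := hF.2
      refine ⟨_, ⟨face h (rkQ F + 1).toNat (by omega) a, (ha _).2 rfl, rfl⟩, ?_⟩
      rw [hrank, rank, level_face]
      omega
  · rintro j c d c' d' hc hd hcd
    have hsub : ∀ (c d : Flag (Face h)) (c' d' : Flag Q), cover h v hv '' ↑c = ↑c' →
        cover h v hv '' ↑d = ↑d' → (∀ F, rank F ≠ j → (F ∈ c → F ∈ d)) →
        ∀ F, rkQ F ≠ j → F ∈ c' → F ∈ d' := by
      intro c d c' d' hc hd hcd F hF hFc
      rw [← SetLike.mem_coe, ← hc] at hFc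
      obtain ⟨G, hG, rfl⟩ := hFc
      rw [← SetLike.mem_coe, ← hd]
      exact ⟨G, hcd G (by rwa [hrank] at hF) hG, rfl⟩
    refine ⟨?_, fun F hF => ⟨hsub c d c' d' hc hd (fun G hG => (hcd.2 G hG).1) F hF,
      hsub d c d' c' hd hc (fun G hG => (hcd.2 G hG).2) F hF⟩⟩
    rintro rfl
    obtain ⟨a, s, hs, h1, h2⟩ := exists_gen_of_adj hcd
    have m1 : v a (s + 1) ∈ c' := by
      rw [← SetLike.mem_coe, ← hc]
      exact ⟨_, h1, rfl⟩
    have m2 : v (a * ρ s) (s + 1) ∈ c' := by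
      rw [← SetLike.mem_coe, ← hd]
      exact ⟨_, h2, rfl⟩
    have hr : rkQ (v (a * ρ s) (s + 1)) = rkQ (v a (s + 1)) := by
      rw [(hflag _).rank, (hflag _).rank]
    rcases (c'.le_or_le m1 m2) with hle | hle <;> rcases hle.eq_or_lt with he | hlt
    · exact hv' a s hs he.symm
    · exact absurd hr (hQ.strictMono hlt).ne'
    · exact hv' a s hs he
    · exact absurd hr (hQ.strictMono hlt).ne

end Covering

/-- Mixing a string of involutions with all its truncations gives a retractive string. -/
lemma exists_lift {M : Type} [Group M] [Finite M] {m : ℕ → M} (hsq : ∀ i, m i * m i = 1)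
    (hcomm : ∀ i j, i + 1 < j → Commute (m i) (m j)) (hne : ∀ i, i < n → m i ≠ 1)
    (hone : ∀ i, n ≤ i → m i = 1) :
    ∃ (Γ : Type) (_ : Group Γ) (_ : Finite Γ) (ρ : ℕ → Γ) (φ : Γ →* M),
      IsRetractiveString n ρ ∧ ∀ l, φ (ρ l) = m l := by
  let σ : ℕ → Fin (n + 1) → M := fun l c => if l < c then m l else 1
  have hlast : ∀ l, σ l (Fin.last n) = m l := by
    intro l
    by_cases hl : l < n
    · simp [σ, hl]
    · simp [σ, hl, hone l (by omega)]
  let K := closure (Set.range σ)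
  let ρ : ℕ → K := fun l => ⟨σ l, subset_closure ⟨l, rfl⟩⟩
  let φ : K →* M := (Pi.evalMonoidHom (fun _ : Fin (n + 1) => M) (Fin.last n)).comp K.subtype
  have hφ : ∀ l, φ (ρ l) = m l := hlast
  refine ⟨K, inferInstance, inferInstance, ρ, φ, ⟨?_, ?_, ?_, ?_, ?_, ?_⟩, hφ⟩
  · intro i
    ext c
    by_cases hi : i < (c : ℕ) <;> simp [ρ, σ, hi, hsq]
  · intro i j hij
    ext c
    by_cases hi : i < (c : ℕ) <;> by_cases hj : j < (c : ℕ) <;>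
      simp [ρ, σ, hi, hj, (hcomm i j hij).eq]
  · intro i hi he
    exact hne i hi (by rw [← hφ, he, map_one])
  · intro i hi
    ext c
    simp [ρ, σ, hone i hi]
  · rw [← closure_closure_coe_preimage (k := Set.range σ)]
    congr 1
    ext x
    constructor
    · rintro ⟨l, rfl⟩
      exact ⟨l, rfl⟩
    · rintro ⟨l, hl⟩
      exact ⟨l, Subtype.ext hl⟩
  · intro t
    let T : (Fin (n + 1) → M) →* (Fin (n + 1) → M) :=
      { toFun := fun x c => x ⟨min c (t - 1), by omega⟩
        map_one' := rfl
        map_mul' := fun _ _ => rfl }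
    have hT : ∀ l, T (σ l) = if l + 1 < t then σ l else 1 := by
      intro l
      ext c
      by_cases hl : l + 1 < t
      · have : l < t - 1 := by omega
        simp [T, σ, hl, this]
      · have : ¬ l < t - 1 := by omega
        simp [T, σ, hl, this]
    have hK : K ≤ K.comap T := by
      rw [closure_le]
      rintro _ ⟨l, rfl⟩
      rw [SetLike.mem_coe, mem_comap, hT]
      split_ifs
      · exact (ρ l).2
      · exact one_mem _
    refine ⟨(T.comp K.subtype).codRestrict K fun x => hK x.2, fun l => Subtype.ext ?_⟩
    refine (hT l).trans ?_
    split_ifs <;> rfl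

end IsRetractiveString

section FlagSeq

variable {n : ℕ} {Q : Type} [PartialOrder Q] {rk : Q → ℤ}

open Classical in
/-- The face strictly between `F` and `G` other than `H`, if there is one, and `H` otherwise. -/
noncomputable def otherFace (F H G : Q) : Q :=
  if hK : ∃ K, K ≠ H ∧ F < K ∧ K < G then hK.choose else H

lemma IsAbstractPolytope.otherFace_spec (hQ : IsAbstractPolytope (n : ℤ) rk) {F H G : Q}
    (hFH : F < H) (hHG : H < G) (hr : rk G = rk F + 2) :
    otherFace F H G ≠ H ∧ F < otherFace F H G ∧ otherFace F H G < G ∧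
      otherFace F (otherFace F H G) G = H := by
  obtain ⟨H₁, H₂, hne, hH⟩ := hQ.diamond F G (hFH.trans hHG) hr
  have key : ∀ H, F < H → H < G →
      otherFace F H G ≠ H ∧ F < otherFace F H G ∧ otherFace F H G < G := by
    intro H hFH hHG
    have hK : ∃ K, K ≠ H ∧ F < K ∧ K < G := by
      rcases (hH H).1 ⟨hFH, hHG⟩ with rfl | rfl
      · exact ⟨H₂, hne.symm, (hH H₂).2 (Or.inr rfl)⟩
      · exact ⟨H₁, hne, (hH H₁).2 (Or.inl rfl)⟩
    rw [otherFace, dif_pos hK]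
    exact hK.choose_spec
  obtain ⟨h1, h2, h3⟩ := key H hFH hHG
  refine ⟨h1, h2, h3, ?_⟩
  obtain ⟨k1, k2, k3⟩ := key _ h2 h3
  have e1 := (hH _).1 ⟨hFH, hHG⟩
  have e2 := (hH _).1 ⟨h2, h3⟩
  have e3 := (hH _).1 ⟨k2, k3⟩
  grind

lemma IsAbstractPolytope.otherFace_eq_self (hQ : IsAbstractPolytope (n : ℤ) rk) {F H G : Q}
    (hr : rk G ≤ rk F + 1) : otherFace F H G = H := by
  rw [otherFace, dif_neg]
  rintro ⟨K, -, h1, h2⟩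
  have := hQ.strictMono h1
  have := hQ.strictMono h2
  omega

/-- Exchange the entry at index `i + 1`, i.e. the face of rank `i`, of a flag. -/
noncomputable def switch (i : ℕ) (f : ℕ → Q) : ℕ → Q :=
  Function.update f (i + 1) (otherFace (f i) (f (i + 1)) (f (i + 2)))

namespace IsFlagSeq

lemma lt_succ {f : ℕ → Q} (hf : IsFlagSeq n rk f) {s : ℕ} (hs : s ≤ n) : f s < f (s + 1) := by
  refine (hf.mono (Nat.le_succ s)).lt_of_ne fun he => ?_
  have h1 := hf.rank s
  rw [he, hf.rank] at h1
  omega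

lemma otherFace_spec (hQ : IsAbstractPolytope (n : ℤ) rk) {f : ℕ → Q} (hf : IsFlagSeq n rk f)
    {i : ℕ} (hi : i < n) :
    otherFace (f i) (f (i + 1)) (f (i + 2)) ≠ f (i + 1) ∧
      f i < otherFace (f i) (f (i + 1)) (f (i + 2)) ∧
      otherFace (f i) (f (i + 1)) (f (i + 2)) < f (i + 2) ∧
      otherFace (f i) (otherFace (f i) (f (i + 1)) (f (i + 2))) (f (i + 2)) = f (i + 1) := by
  refine hQ.otherFace_spec (hf.lt_succ (by omega)) (hf.lt_succ (by omega)) ?_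
  rw [hf.rank, hf.rank]
  omega

lemma switch_eq_self (hQ : IsAbstractPolytope (n : ℤ) rk) {f : ℕ → Q} (hf : IsFlagSeq n rk f)
    {i : ℕ} (hi : n ≤ i) : switch i f = f := by
  rw [switch, hQ.otherFace_eq_self, Function.update_eq_self]
  rw [hf.rank, hf.rank]
  omega

lemma isFlagSeq_switch (hQ : IsAbstractPolytope (n : ℤ) rk) {f : ℕ → Q} (hf : IsFlagSeq n rk f)
    (i : ℕ) : IsFlagSeq n rk (switch i f) := by
  by_cases hi : i < n
  · obtain ⟨-, h2, h3, -⟩ := hf.otherFace_spec hQ hi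
    constructor
    · refine monotone_nat_of_le_succ fun s => ?_
      simp only [switch, Function.update_apply]
      split_ifs with e1 e2 e2
      · omega
      · obtain rfl := e1
        exact h3.le
      · obtain rfl : s = i := by omega
        exact h2.le
      · exact hf.mono (Nat.le_succ s)
    · intro s
      simp only [switch, Function.update_apply]
      split_ifs with e
      · have h4 := hQ.strictMono h2
        have h5 := hQ.strictMono h3
        rw [hf.rank] at h4 h5
        omega
      · exact hf.rank s
  · rwa [hf.switch_eq_self hQ (by omega)]

lemma switch_switch (hQ : IsAbstractPolytope (n : ℤ) rk) {f : ℕ → Q} (hf : IsFlagSeq n rk f)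
    (i : ℕ) : switch i (switch i f) = f := by
  by_cases hi : i < n
  · obtain ⟨-, -, -, h4⟩ := hf.otherFace_spec hQ hi
    simp [switch, h4]
  · rw [hf.switch_eq_self hQ (by omega), hf.switch_eq_self hQ (by omega)]

lemma switch_apply_ne (hQ : IsAbstractPolytope (n : ℤ) rk) {f : ℕ → Q} (hf : IsFlagSeq n rk f)
    {i : ℕ} (hi : i < n) : switch i f (i + 1) ≠ f (i + 1) := by
  simpa [switch] using (hf.otherFace_spec hQ hi).1

lemma apply_min (hQ : IsAbstractPolytope (n : ℤ) rk) {f : ℕ → Q} (hf : IsFlagSeq n rk f)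
    (s : ℕ) : f (min s (n + 1)) = f s := by
  rcases (hf.mono (min_le_left s (n + 1))).eq_or_lt with he | hlt
  · exact he
  · have h1 := hQ.strictMono hlt
    rw [hf.rank, hf.rank] at h1
    omega

lemma finite [Finite Q] (hQ : IsAbstractPolytope (n : ℤ) rk) :
    Finite {f : ℕ → Q // IsFlagSeq n rk f} := by
  refine Finite.of_injective (fun f (i : Fin (n + 2)) => f.1 i) fun f g hfg => ?_
  refine Subtype.ext (funext fun s => ?_)
  rw [← f.2.apply_min hQ, ← g.2.apply_min hQ]
  exact congrFun hfg ⟨min s (n + 1), by omega⟩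

end IsFlagSeq

lemma switch_comm {i j : ℕ} (hij : i + 1 < j) (f : ℕ → Q) :
    switch i (switch j f) = switch j (switch i f) := by
  have h1 : i ≠ j + 1 := by omega
  have h2 : i + 1 ≠ j + 1 := by omega
  have h3 : i + 2 ≠ j + 1 := by omega
  have h4 : j ≠ i + 1 := by omega
  have h5 : j + 2 ≠ i + 1 := by omega
  simp only [switch, Function.update_of_ne h1, Function.update_of_ne h2, Function.update_of_ne h3,
    Function.update_of_ne h4, Function.update_of_ne h2.symm, Function.update_of_ne h5]
  exact Function.update_comm h2.symm _ _ _

/-- Adjacent flags have faces of the same ranks. -/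
lemma IsPolytopeAdj.exists_rank_eq {P : Type} [PartialOrder P] {rk : P → ℤ} {j r : ℤ} {c d : Flag P}
    (hcd : IsPolytopeAdj rk j c d) (hc : ∃ F ∈ c, rk F = r) : ∃ F ∈ d, rk F = r := by
  obtain ⟨F, hF, rfl⟩ := hc
  by_cases hj : rk F = j
  · by_contra! hall
    refine hcd.1 (Flag.ext (d.max_chain' c.chain_le fun G hG => ?_)).symm
    exact (hcd.2 G (hj ▸ hall G hG)).2 hG
  · exact ⟨F, (hcd.2 F hj).1 hF, rfl⟩

lemma IsAbstractPolytope.exists_isFlagSeq (hQ : IsAbstractPolytope (n : ℤ) rk) :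
    ∃ f, IsFlagSeq n rk f := by
  obtain ⟨B, hB⟩ := hQ.exists_bot
  obtain ⟨T, hT⟩ := hQ.exists_top
  obtain ⟨c⟩ : Nonempty (Flag (Set.Icc B T)) := inferInstance
  have hit : ∀ s : ℕ, ∃ F ∈ c, rk F.1 = (min s (n + 1) : ℕ) - 1 := by
    intro s
    obtain ⟨F, hF⟩ : ((min s (n + 1) : ℕ) - 1 : ℤ) ∈ Set.range rk := by
      rw [hQ.rank_range, Set.mem_Icc]
      omega
    obtain ⟨d, hd⟩ := Flag.exists_mem (⟨F, hB F, hT F⟩ : Set.Icc B T)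
    have hdc := hQ.strongly_connected B T (hB T) d c
    induction hdc with
    | refl => exact ⟨_, hd, hF⟩
    | tail _ hadj ih =>
      obtain ⟨j, hj⟩ := hadj
      exact hj.exists_rank_eq ih
  choose f hfc hf using hit
  refine ⟨fun s => (f s).1, monotone_nat_of_le_succ fun s => ?_, hf⟩
  rcases c.le_or_le (hfc s) (hfc (s + 1)) with hle | hle
  · exact hle
  · rcases hle.eq_or_lt with he | hlt
    · exact he.ge
    · have h1 := hQ.strictMono hlt
      rw [hf, hf] at h1
      omega

end FlagSeq

/-- **Every finite abstract `n`-polytope is covered by a finite regular abstract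
`n`-polytope.** -/
theorem finite_polytope_has_finite_regular_cover {n : ℕ} {Q : Type} [PartialOrder Q]
    [Finite Q] (rkQ : Q → ℤ) (hQ : IsAbstractPolytope (n : ℤ) rkQ) :
    ∃ R : BundledPolytope (n : ℤ), Finite R.carrier ∧ IsRegularPolytope (P := R.carrier) ∧
      ∃ η : R.carrier → Q, IsPolytopeCovering R.rk rkQ η := by
  obtain ⟨f₀, hf₀⟩ := hQ.exists_isFlagSeq
  let X := {f : ℕ → Q // IsFlagSeq n rkQ f}
  have : Finite X := IsFlagSeq.finite hQ
  let m : ℕ → Equiv.Perm X := fun i => Function.Involutive.toPerm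
    (fun f => ⟨switch i f.1, f.2.isFlagSeq_switch hQ i⟩)
    (fun f => Subtype.ext (f.2.switch_switch hQ i))
  have hm : ∀ i f, (m i f).1 = switch i f.1 := fun _ _ => rfl
  have hsq : ∀ i, m i * m i = 1 := fun i =>
    Equiv.ext fun f => Subtype.ext (f.2.switch_switch hQ i)
  obtain ⟨Γ, _, _, ρ, φ, h, hφ⟩ := IsRetractiveString.exists_lift (n := n) hsq
    (fun i j hij => Equiv.ext fun f => Subtype.ext (switch_comm hij f.1))
    (fun i hi he => hf₀.switch_apply_ne hQ hi <| by
      rw [← hm i ⟨f₀, hf₀⟩, he]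
      rfl)
    (fun i hi => Equiv.ext fun f => Subtype.ext (f.2.switch_eq_self hQ hi))
  let v : Γ → ℕ → Q := fun a => (φ a⁻¹ ⟨f₀, hf₀⟩).1
  have hv : ∀ a l, v (a * ρ l) = switch l (v a) := by
    intro a l
    simp only [v]
    rw [mul_inv_rev, map_mul, inv_eq_of_mul_eq_one_left (h.mul_self l), hφ]
    rfl
  have hvf : ∀ a, IsFlagSeq n rkQ (v a) := fun a => (φ a⁻¹ ⟨f₀, hf₀⟩).2
  refine ⟨⟨h.Face, IsRetractiveString.rank, h.isAbstractPolytope⟩, ?_, h.isRegularPolytope,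
    h.cover v ?_, IsRetractiveString.isPolytopeCovering_cover hQ _ ?_ hvf⟩
  · exact inferInstanceAs (Finite h.Face)
  · intro a s l hsl
    rw [hv, switch, Function.update_of_ne hsl]
  · intro a s hs
    rw [hv]
    exact (hvf a).switch_apply_ne hQ hs
end

section
/- Let Q be a finite abstract n-polytope and let 1 ≤ k ≤ n-1. If every k-face of Q (that is, every section F/F_{-1} where rk(F) = k and F_{-1} is the least face) is isomorphic as a partially ordered set to one fixed regular k-polytope K, then there exists a finite regular n-polytope R covering Q all of whose k-faces are isomorphic to K. -/
/-- The subgroup generated by the `r i` with `i ∈ S`. -/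
def standardSubgroup {A : Type*} [Group A] (r : ℤ → A) (S : Set ℤ) : Subgroup A :=
  Subgroup.closure (Set.image r S)

/-- The family `r` consists of commuting-unless-neighbouring involutions (trivial outside
`0, ..., n - 1`) which are independent and satisfy the intersection property for pairs of maximal
standard subgroups. -/
structure IsStringCGroup_s2 {A : Type*} [Group A] (n : ℤ) (r : ℤ → A) : Prop where
  sq : ∀ i, r i * r i = 1
  comm : ∀ i j, i + 2 ≤ j → Commute (r i) (r j)
  eq_one : ∀ i, i < 0 ∨ n ≤ i → r i = 1
  not_mem : ∀ i, 0 ≤ i → i < n → r i ∉ standardSubgroup r {i}ᶜ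
  inter : ∀ i j, i < j → j ≤ n → ∀ g ∈ standardSubgroup r {i}ᶜ,
    g ∈ standardSubgroup r {j}ᶜ → g ∈ standardSubgroup r {i, j}ᶜ

section StandardSubgroup

variable {A : Type*} [Group A] {r : ℤ → A}

theorem mem_standardSubgroup {S : Set ℤ} {i : ℤ} (h : i ∈ S) : r i ∈ standardSubgroup r S :=
  Subgroup.subset_closure ⟨i, h, rfl⟩

theorem standardSubgroup_mono {S T : Set ℤ} (h : S ⊆ T) :
    standardSubgroup r S ≤ standardSubgroup r T :=
  Subgroup.closure_mono (Set.image_mono h)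

theorem standardSubgroup_le {S : Set ℤ} {N : Subgroup A} (h : ∀ i ∈ S, r i ∈ N) :
    standardSubgroup r S ≤ N := by
  rw [standardSubgroup, Subgroup.closure_le]
  rintro _ ⟨i, hi, rfl⟩
  exact h i hi

theorem commute_of_mem_standardSubgroup {S T : Set ℤ}
    (hST : ∀ i ∈ S, ∀ j ∈ T, Commute (r i) (r j)) {a b : A}
    (ha : a ∈ standardSubgroup r S) (hb : b ∈ standardSubgroup r T) : Commute a b := by
  have h₁ : standardSubgroup r T ≤ Subgroup.centralizer (standardSubgroup r S : Set A) := by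
    refine standardSubgroup_le fun j hj => ?_
    have : standardSubgroup r S ≤ Subgroup.centralizer {r j} :=
      standardSubgroup_le fun i hi => by
        rw [Subgroup.mem_centralizer_singleton_iff]
        exact (hST i hi j hj)
    rw [Subgroup.mem_centralizer_iff]
    intro x hx
    exact (Subgroup.mem_centralizer_singleton_iff.1 (this hx))
  exact Subgroup.mem_centralizer_iff.1 (h₁ hb) a ha

theorem exists_mul_of_mem_standardSubgroup_union {S T : Set ℤ}
    (hST : ∀ i ∈ S, ∀ j ∈ T, Commute (r i) (r j)) {g : A}
    (hg : g ∈ standardSubgroup r (S ∪ T)) :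
    ∃ a ∈ standardSubgroup r S, ∃ b ∈ standardSubgroup r T, g = a * b := by
  induction hg using Subgroup.closure_induction with
  | mem x hx =>
    obtain ⟨i, hi | hi, rfl⟩ := hx
    · exact ⟨r i, mem_standardSubgroup hi, 1, one_mem _, by simp⟩
    · exact ⟨1, one_mem _, r i, mem_standardSubgroup hi, by simp⟩
  | one => exact ⟨1, one_mem _, 1, one_mem _, by simp⟩
  | mul x y _ _ hx hy =>
    obtain ⟨a, ha, b, hb, rfl⟩ := hx
    obtain ⟨a', ha', b', hb', rfl⟩ := hy
    refine ⟨a * a', mul_mem ha ha', b * b', mul_mem hb hb', ?_⟩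
    have := (commute_of_mem_standardSubgroup hST ha' hb).eq
    rw [mul_assoc, ← mul_assoc b, ← this]
    simp only [mul_assoc]
  | inv x _ hx =>
    obtain ⟨a, ha, b, hb, rfl⟩ := hx
    refine ⟨a⁻¹, inv_mem ha, b⁻¹, inv_mem hb, ?_⟩
    rw [(commute_of_mem_standardSubgroup hST ha hb).eq, mul_inv_rev]

theorem eq_one_or_eq_of_mem_standardSubgroup_singleton {i : ℤ} (hsq : r i * r i = 1) {g : A}
    (hg : g ∈ standardSubgroup r {i}) : g = 1 ∨ g = r i := by
  rw [standardSubgroup, Set.image_singleton] at hg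
  induction hg using Subgroup.closure_induction with
  | mem x hx => exact Or.inr hx
  | one => exact Or.inl rfl
  | mul x y _ _ hx hy =>
    rcases hx with rfl | rfl <;> rcases hy with rfl | rfl <;> simp [hsq]
  | inv x _ hx =>
    rcases hx with rfl | rfl
    · simp
    · exact Or.inr (inv_eq_of_mul_eq_one_left hsq)

theorem exists_mul_of_mem_standardSubgroup_compl
    (hcomm : ∀ i j, i + 2 ≤ j → Commute (r i) (r j)) {j : ℤ} {g : A}
    (hg : g ∈ standardSubgroup r {j}ᶜ) :
    ∃ a ∈ standardSubgroup r (Set.Iio j), ∃ b ∈ standardSubgroup r (Set.Ioi j), g = a * b := by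
  rw [← Set.Iio_union_Ioi] at hg
  refine exists_mul_of_mem_standardSubgroup_union (fun i hi l hl => hcomm i l ?_) hg
  simp only [Set.mem_Iio, Set.mem_Ioi] at hi hl
  omega

theorem IsStringCGroup_s2.commute_Iio_Ioi {n : ℤ} (hr : IsStringCGroup_s2 n r) {j : ℤ} {a b : A}
    (ha : a ∈ standardSubgroup r (Set.Iio j)) (hb : b ∈ standardSubgroup r (Set.Ioi j)) :
    Commute a b := by
  refine commute_of_mem_standardSubgroup (fun i hi l hl => hr.comm i l ?_) ha hb
  simp only [Set.mem_Iio, Set.mem_Ioi] at hi hl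
  omega

/-- The intersection property holds as soon as it holds below `k` and the truncations of the family
at every `m` from `k` to `n` are induced by endomorphisms. -/
theorem mem_standardSubgroup_compl_pair_of_retractions {k n : ℤ} (hkn : k ≤ n)
    (hcomm : ∀ i j, i + 2 ≤ j → Commute (r i) (r j))
    (hret : ∀ m, k ≤ m → m ≤ n → ∃ π : A →* A,
      (∀ i, i < m → π (r i) = r i) ∧ ∀ i, m ≤ i → π (r i) = 1)
    (hbase : ∀ i j, i < j → j < k → ∀ g ∈ standardSubgroup r (Set.Iio k \ {i}),
      g ∈ standardSubgroup r (Set.Iio k \ {j}) → g ∈ standardSubgroup r (Set.Iio k \ {i, j}))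
    {i j : ℤ} (hij : i < j) (hjn : j ≤ n) {g : A} (hgi : g ∈ standardSubgroup r {i}ᶜ)
    (hgj : g ∈ standardSubgroup r {j}ᶜ) : g ∈ standardSubgroup r {i, j}ᶜ := by
  have hmap : ∀ (m : ℤ) (π : A →* A), (∀ i, i < m → π (r i) = r i) →
      (∀ i, m ≤ i → π (r i) = 1) → ∀ (S : Set ℤ), ∀ x ∈ standardSubgroup r S,
        π x ∈ standardSubgroup r (Set.Iio m ∩ S) := by
    intro m π h₁ h₂ S
    change standardSubgroup r S ≤ (standardSubgroup r (Set.Iio m ∩ S)).comap π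
    refine standardSubgroup_le fun l hl => ?_
    rw [Subgroup.mem_comap]
    rcases lt_or_ge l m with h | h
    · rw [h₁ l h]; exact mem_standardSubgroup ⟨h, hl⟩
    · rw [h₂ l h]; exact one_mem _
  obtain ⟨a, ha, b, hb, rfl⟩ := exists_mul_of_mem_standardSubgroup_compl hcomm hgj
  have hIoi : Set.Ioi j ⊆ ({i, j}ᶜ : Set ℤ) := by
    intro l hl
    simp only [Set.mem_Ioi, Set.mem_compl_iff, Set.mem_insert_iff, Set.mem_singleton_iff] at *
    omega
  rcases lt_or_ge j k with hjk | hjk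
  · obtain ⟨π, h₁, h₂⟩ := hret k le_rfl hkn
    have hi := hmap k π h₁ h₂ _ _ hgi
    have hj := hmap k π h₁ h₂ _ _ hgj
    have hπ := standardSubgroup_mono (fun l hl => hl.2 : Set.Iio k \ {i, j} ⊆ {i, j}ᶜ)
      (hbase i j hij hjk _ hi hj)
    have hπb := standardSubgroup_mono (fun l hl => hIoi hl.2 : Set.Iio k ∩ Set.Ioi j ⊆ _)
      (hmap k π h₁ h₂ _ _ hb)
    have ha' : π a = a := by
      have : standardSubgroup r (Set.Iio j) ≤ π.eqLocus (MonoidHom.id A) :=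
        standardSubgroup_le fun l hl => h₁ l (lt_trans hl hjk)
      exact this ha
    rw [map_mul, ha'] at hπ
    have := mul_mem (mul_mem hπ (inv_mem hπb)) (standardSubgroup_mono hIoi hb)
    rwa [mul_inv_cancel_right] at this
  · obtain ⟨π, h₁, h₂⟩ := hret j hjk hjn
    have hi := hmap j π h₁ h₂ _ _ hgi
    have ha' : π a = a := by
      have : standardSubgroup r (Set.Iio j) ≤ π.eqLocus (MonoidHom.id A) :=
        standardSubgroup_le fun l hl => h₁ l hl
      exact this ha
    have hb' : π b = 1 := by
      have : standardSubgroup r (Set.Ioi j) ≤ π.ker :=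
        standardSubgroup_le fun l hl => h₂ l (le_of_lt hl)
      exact this hb
    rw [map_mul, ha', hb', mul_one] at hi
    refine mul_mem (standardSubgroup_mono ?_ hi) (standardSubgroup_mono hIoi hb)
    intro l hl
    simp only [Set.mem_inter_iff, Set.mem_Iio, Set.mem_compl_iff, Set.mem_insert_iff,
      Set.mem_singleton_iff] at *
    omega

end StandardSubgroup

/-- The faces of the coset poset of `r`: a rank `j` together with a right coset of the standard
subgroup omitting `r j`. -/
def CosetFace {A : Type*} [Group A] (n : ℤ) (r : ℤ → A) : Type _ :=
  {x : ℤ × Set A // (-1 ≤ x.1 ∧ x.1 ≤ n) ∧ ∃ g ∈ standardSubgroup r Set.univ,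
    x.2 = {h | h * g⁻¹ ∈ standardSubgroup r {x.1}ᶜ}}

namespace CosetFace

variable {A : Type*} [Group A] {n : ℤ} {r : ℤ → A}

/-- The rank of a face. -/
def rk (x : CosetFace n r) : ℤ := x.1.1

/-- The coset underlying a face. -/
def coset (x : CosetFace n r) : Set A := x.1.2

/-- The face of rank `j` containing `g`. -/
def mk (g : A) (hg : g ∈ standardSubgroup r Set.univ) (j : ℤ) (hj : -1 ≤ j ∧ j ≤ n) :
    CosetFace n r :=
  ⟨(j, {h | h * g⁻¹ ∈ standardSubgroup r {j}ᶜ}), hj, g, hg, rfl⟩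

@[simp] theorem rk_mk (g : A) (hg : g ∈ standardSubgroup r Set.univ) (j : ℤ)
    (hj : -1 ≤ j ∧ j ≤ n) : (mk g hg j hj : CosetFace n r).rk = j := rfl

theorem mem_mk (g : A) (hg : g ∈ standardSubgroup r Set.univ) (j : ℤ)
    (hj : -1 ≤ j ∧ j ≤ n) : g ∈ (mk g hg j hj : CosetFace n r).coset := by
  simp [mk, coset, one_mem]

theorem rk_bounds (x : CosetFace n r) : -1 ≤ x.rk ∧ x.rk ≤ n := x.2.1

theorem exists_mem (x : CosetFace n r) : ∃ g, g ∈ x.coset := by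
  obtain ⟨g, hg, h⟩ := x.2.2
  exact ⟨g, by simp [coset, h, one_mem]⟩

theorem mem_iff {x : CosetFace n r} {g : A} (hg : g ∈ x.coset) (h : A) :
    h ∈ x.coset ↔ h * g⁻¹ ∈ standardSubgroup r {x.rk}ᶜ := by
  obtain ⟨u, hu, hx⟩ := x.2.2
  simp only [coset, hx, Set.mem_ofPred_eq] at hg ⊢
  have : h * g⁻¹ = (h * u⁻¹) * (g * u⁻¹)⁻¹ := by group
  rw [rk, this, Subgroup.mul_mem_cancel_right _ (inv_mem hg)]

theorem mem_univ_of_mem {x : CosetFace n r} {g : A} (hg : g ∈ x.coset) :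
    g ∈ standardSubgroup r Set.univ := by
  obtain ⟨u, hu, hx⟩ := x.2.2
  simp only [coset, hx, Set.mem_ofPred_eq] at hg
  have := mul_mem (standardSubgroup_mono (Set.subset_univ _) hg) hu
  simpa using this

theorem eq_of_mem {x y : CosetFace n r} {g : A} (h : x.rk = y.rk) (hx : g ∈ x.coset)
    (hy : g ∈ y.coset) : x = y := by
  apply Subtype.ext
  apply Prod.ext h
  ext u
  exact (mem_iff hx u).trans (by rw [h]; exact (mem_iff hy u).symm)

theorem mul_mem_coset {x : CosetFace n r} {g a : A} {S : Set ℤ} (hg : g ∈ x.coset)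
    (ha : a ∈ standardSubgroup r S) (hS : x.rk ∉ S) : a * g ∈ x.coset := by
  rw [mem_iff hg]
  simpa using standardSubgroup_mono (fun l hl => by rintro rfl; exact hS hl : S ⊆ {x.rk}ᶜ) ha

theorem exists_common {n : ℤ} {r : ℤ → A} (hr : IsStringCGroup_s2 n r) {y : CosetFace n r} {g h : A}
    (hg : g ∈ y.coset) (hh : h ∈ y.coset) :
    ∃ u, (∀ x : CosetFace n r, x.rk ≤ y.rk → g ∈ x.coset → u ∈ x.coset) ∧
      ∀ z : CosetFace n r, y.rk ≤ z.rk → h ∈ z.coset → u ∈ z.coset := by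
  obtain ⟨a, ha, b, hb, hab⟩ := exists_mul_of_mem_standardSubgroup_compl hr.comm
    ((mem_iff hg h).1 hh)
  refine ⟨b * g, fun x hx hgx => mul_mem_coset hgx hb (by simpa using hx), fun z hz hhz => ?_⟩
  have : b * g = a⁻¹ * h := by
    rw [eq_inv_mul_iff_mul_eq, ← mul_assoc, ← hab]; simp
  rw [this]
  exact mul_mem_coset hhz (inv_mem ha) (by simpa using hz)

/-- Two faces are incident when they have a common element. -/
abbrev partialOrder (hr : IsStringCGroup_s2 n r) : PartialOrder (CosetFace n r) where
  le x y := x.rk ≤ y.rk ∧ ∃ g, g ∈ x.coset ∧ g ∈ y.coset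
  le_refl x := ⟨le_rfl, by obtain ⟨g, hg⟩ := x.exists_mem; exact ⟨g, hg, hg⟩⟩
  le_trans := by
    rintro x y z ⟨hxy, g, hgx, hgy⟩ ⟨hyz, h, hhy, hhz⟩
    obtain ⟨u, hu₁, hu₂⟩ := exists_common hr hgy hhy
    exact ⟨hxy.trans hyz, u, hu₁ x hxy hgx, hu₂ z hyz hhz⟩
  le_antisymm := by
    rintro x y ⟨hxy, g, hgx, hgy⟩ ⟨hyx, _⟩
    exact eq_of_mem (le_antisymm hxy hyx) hgx hgy

theorem le_iff (hr : IsStringCGroup_s2 n r) {x y : CosetFace n r} :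
    letI := partialOrder hr
    x ≤ y ↔ x.rk ≤ y.rk ∧ ∃ g, g ∈ x.coset ∧ g ∈ y.coset := Iff.rfl

theorem lt_iff (hr : IsStringCGroup_s2 n r) {x y : CosetFace n r} :
    letI := partialOrder hr
    x < y ↔ x.rk < y.rk ∧ ∃ g, g ∈ x.coset ∧ g ∈ y.coset := by
  let := partialOrder hr
  constructor
  · intro h
    obtain ⟨h₁, g, hx, hy⟩ := (le_iff hr).1 h.le
    exact ⟨lt_of_le_of_ne h₁ fun e => h.ne (eq_of_mem e hx hy), g, hx, hy⟩
  · rintro ⟨h₁, h₂⟩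
    exact lt_of_le_of_ne ((le_iff hr).2 ⟨h₁.le, h₂⟩) (by rintro rfl; exact lt_irrefl _ h₁)

theorem exists_mem_chain (hr : IsStringCGroup_s2 n r) (s : Finset (CosetFace n r))
    (hs : letI := partialOrder hr; IsChain (· ≤ ·) (s : Set (CosetFace n r))) :
    ∃ g ∈ standardSubgroup r Set.univ, ∀ x ∈ s, g ∈ x.coset := by
  classical
  let := partialOrder hr
  revert hs
  refine Finset.induction_on_max_value rk s ?_ ?_
  · exact fun _ => ⟨1, one_mem _, by simp⟩
  · intro a s has hmax ih hs
    obtain ⟨g, hgu, hg⟩ := ih (hs.mono (by simp))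
    rcases s.eq_empty_or_nonempty with rfl | hne
    · obtain ⟨g, hg⟩ := a.exists_mem
      exact ⟨g, mem_univ_of_mem hg, by simpa using hg⟩
    · obtain ⟨b, hb, hbmax⟩ := s.exists_max_image rk hne
      have hab : ∃ h, h ∈ b.coset ∧ h ∈ a.coset := by
        rcases hs.total (show b ∈ _ by simp [hb]) (show a ∈ _ by simp) with h | h
        · exact ((le_iff hr).1 h).2
        · obtain ⟨g, h₁, h₂⟩ := ((le_iff hr).1 h).2
          exact ⟨g, h₂, h₁⟩
      obtain ⟨h, hhb, hha⟩ := hab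
      obtain ⟨u, hu₁, hu₂⟩ := exists_common hr (hg b hb) hhb
      have hua := hu₂ a (hmax b hb) hha
      refine ⟨u, mem_univ_of_mem hua, fun x hx => ?_⟩
      rcases Finset.mem_insert.1 hx with rfl | hx
      · exact hua
      · exact hu₁ x (hbmax x hx) (hg x hx)

instance [Finite A] : Finite (CosetFace n r) := by
  let f : CosetFace n r → Set.Icc (-1 : ℤ) n × Set A := fun x => (⟨x.rk, x.rk_bounds⟩, x.coset)
  refine Finite.of_injective f fun x y h => ?_
  simp only [f, Prod.mk.injEq] at h
  exact Subtype.ext (Prod.ext (congrArg Subtype.val h.1) h.2)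

theorem mul_inv_mem_compl_pair (hr : IsStringCGroup_s2 n r) {x y : CosetFace n r}
    (hxy : x.rk ≤ y.rk) {g h : A} (hgx : g ∈ x.coset) (hgy : g ∈ y.coset) (hhx : h ∈ x.coset)
    (hhy : h ∈ y.coset) : h * g⁻¹ ∈ standardSubgroup r {x.rk, y.rk}ᶜ := by
  have h₁ := (mem_iff hgx h).1 hhx
  rcases hxy.lt_or_eq with hlt | heq
  · exact hr.inter _ _ hlt y.rk_bounds.2 _ h₁ ((mem_iff hgy h).1 hhy)
  · rw [← heq]; simpa using h₁

/-- The two faces between faces whose ranks differ by two. -/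
theorem mem_coset_or_of_between (hr : IsStringCGroup_s2 n r) {x y z : CosetFace n r} {g : A}
    (hgx : g ∈ x.coset) (hgz : g ∈ z.coset) (hy : y.rk = x.rk + 1) (hz : z.rk = x.rk + 2)
    (hxy : ∃ u, u ∈ x.coset ∧ u ∈ y.coset) (hyz : ∃ u, u ∈ y.coset ∧ u ∈ z.coset) :
    g ∈ y.coset ∨ r y.rk * g ∈ y.coset := by
  obtain ⟨u₁, h₁x, h₁y⟩ := hxy
  obtain ⟨u₂, h₂y, h₂z⟩ := hyz
  obtain ⟨u, hu₁, hu₂⟩ := exists_common hr h₁y h₂y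
  have hux := hu₁ x (by omega) h₁x
  have huy := hu₁ y le_rfl h₁y
  have huz := hu₂ z (by omega) h₂z
  have hu := mul_inv_mem_compl_pair hr (by omega) hgx hgz hux huz
  have hset : ({x.rk, z.rk}ᶜ : Set ℤ) = (Set.Iio x.rk ∪ Set.Ioi z.rk) ∪ {y.rk} := by
    ext l
    simp only [Set.mem_compl_iff, Set.mem_insert_iff, Set.mem_singleton_iff, Set.mem_union,
      Set.mem_Iio, Set.mem_Ioi]
    omega
  rw [hset] at hu
  obtain ⟨a, ha, b, hb, hab⟩ := exists_mul_of_mem_standardSubgroup_union (r := r) (by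
    intro i hi j hj
    simp only [Set.mem_singleton_iff, Set.mem_union, Set.mem_Iio, Set.mem_Ioi] at hi hj
    rcases hi with hi | hi
    · exact hr.comm _ _ (by omega)
    · exact (hr.comm _ _ (by omega)).symm) hu
  have hbg : b * g ∈ y.coset := by
    have : b * g = a⁻¹ * u := by
      rw [eq_inv_mul_iff_mul_eq, ← mul_assoc, ← hab]; simp
    rw [this]
    refine mul_mem_coset huy (inv_mem ha) ?_
    simp only [Set.mem_union, Set.mem_Iio, Set.mem_Ioi]
    omega
  rcases eq_one_or_eq_of_mem_standardSubgroup_singleton (hr.sq _) hb with rfl | rfl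
  · left; simpa using hbg
  · right; exact hbg

/-- The set of faces of a section which contain `g` is a flag of the section. -/
def sectionFlag (hr : IsStringCGroup_s2 n r) {F G : CosetFace n r} (g : A) (hF : g ∈ F.coset)
    (hG : g ∈ G.coset) : letI := partialOrder hr; Flag ↥(Set.Icc F G) :=
  letI := partialOrder hr
  { carrier := {x | g ∈ x.1.coset}
    Chain' := fun x hx y hy _ => by
      rcases le_total x.1.rk y.1.rk with h | h
      · exact Or.inl ((le_iff hr).2 ⟨h, g, hx, hy⟩)
      · exact Or.inr ((le_iff hr).2 ⟨h, g, hy, hx⟩)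
    max_chain' := fun s hs hle => by
      refine Set.Subset.antisymm hle fun x hx => ?_
      have hgu := mem_univ_of_mem hF
      let y : CosetFace n r := mk g hgu x.1.rk x.1.rk_bounds
      have hgy : g ∈ y.coset := mem_mk _ _ _ _
      have hy : y ∈ Set.Icc F G :=
        ⟨(le_iff hr).2 ⟨x.2.1.1, g, hF, hgy⟩, (le_iff hr).2 ⟨x.2.2.1, g, hgy, hG⟩⟩
      have hys : (⟨y, hy⟩ : ↥(Set.Icc F G)) ∈ s := hle hgy
      have : x.1 = y := by
        rcases hs.total hx hys with h | h
        · obtain ⟨_, u, h₁, h₂⟩ := (le_iff hr).1 h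
          exact eq_of_mem rfl h₁ h₂
        · obtain ⟨_, u, h₁, h₂⟩ := (le_iff hr).1 h
          exact eq_of_mem rfl h₂ h₁
      change g ∈ x.1.coset
      rw [this]; exact hgy }

theorem mem_sectionFlag (hr : IsStringCGroup_s2 n r) {F G : CosetFace n r} (g : A) (hF : g ∈ F.coset)
    (hG : g ∈ G.coset) : letI := partialOrder hr
    ∀ x : ↥(Set.Icc F G), x ∈ sectionFlag hr g hF hG ↔ g ∈ x.1.coset := fun _ => Iff.rfl

theorem exists_eq_sectionFlag [Finite A] (hr : IsStringCGroup_s2 n r) {F G : CosetFace n r} :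
    letI := partialOrder hr
    ∀ (_ : F ≤ G) (c : Flag ↥(Set.Icc F G)), ∃ (g : A) (hF : g ∈ F.coset) (hG : g ∈ G.coset),
      c = sectionFlag hr g hF hG := by
  classical
  let := partialOrder hr
  intro hFG c
  have hbot : (⟨F, le_rfl, hFG⟩ : ↥(Set.Icc F G)) ∈ c :=
    Flag.mem_iff_forall_le_or_ge.2 fun b _ => Or.inl b.2.1
  have htop : (⟨G, hFG, le_rfl⟩ : ↥(Set.Icc F G)) ∈ c :=
    Flag.mem_iff_forall_le_or_ge.2 fun b _ => Or.inr b.2.2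
  have hfin : (Subtype.val '' (c : Set ↥(Set.Icc F G))).Finite := Set.toFinite _
  obtain ⟨g, -, hg⟩ := exists_mem_chain hr hfin.toFinset (by
    rw [Set.Finite.coe_toFinset]
    rintro _ ⟨x, hx, rfl⟩ _ ⟨y, hy, rfl⟩ _
    exact c.chain_le.total hx hy)
  simp only [Set.Finite.mem_toFinset] at hg
  have hF : g ∈ F.coset := hg F ⟨_, hbot, rfl⟩
  have hG : g ∈ G.coset := hg G ⟨_, htop, rfl⟩
  refine ⟨g, hF, hG, SetLike.coe_injective ?_⟩
  exact c.max_chain' (sectionFlag hr g hF hG).Chain' fun x hx => hg _ ⟨x, hx, rfl⟩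

theorem reflTransGen_sectionFlag (hr : IsStringCGroup_s2 n r) {F G : CosetFace n r}
    {g w : A} (hF : g ∈ F.coset) (hG : g ∈ G.coset)
    (hw : w ∈ standardSubgroup r {F.rk, G.rk}ᶜ) :
    letI := partialOrder hr
    ∀ (hF' : w * g ∈ F.coset) (hG' : w * g ∈ G.coset), Relation.ReflTransGen
      (fun c' d' => ∃ j : ℤ, IsPolytopeAdj (fun H : ↥(Set.Icc F G) => H.val.rk) j c' d')
      (sectionFlag hr g hF hG) (sectionFlag hr (w * g) hF' hG') := by
  let := partialOrder hr
  have step : ∀ l ∈ ({F.rk, G.rk}ᶜ : Set ℤ), ∀ u (hF : u ∈ F.coset) (hG : u ∈ G.coset)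
      (hF' : r l * u ∈ F.coset) (hG' : r l * u ∈ G.coset), Relation.ReflTransGen
      (fun c' d' => ∃ j : ℤ, IsPolytopeAdj (fun H : ↥(Set.Icc F G) => H.val.rk) j c' d')
      (sectionFlag hr u hF hG) (sectionFlag hr (r l * u) hF' hG') := by
    intro l hl u hF hG hF' hG'
    by_cases he : sectionFlag hr u hF hG = sectionFlag hr (r l * u) hF' hG'
    · rw [he]
    · refine Relation.ReflTransGen.single ⟨l, he, fun z hz => ?_⟩
      rw [mem_sectionFlag, mem_sectionFlag]
      refine ⟨fun h => mul_mem_coset h (mem_standardSubgroup (Set.mem_singleton l)) hz,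
        fun h => ?_⟩
      have := mul_mem_coset h (mem_standardSubgroup (r := r) (Set.mem_singleton l)) hz
      rwa [← mul_assoc, hr.sq, one_mul] at this
  induction hw using Subgroup.closure_induction_left with
  | one =>
    intro hF' hG'
    simp only [one_mul]
    exact Relation.ReflTransGen.refl
  | mul_left x hx y hy ih =>
    obtain ⟨l, hl, rfl⟩ := hx
    intro hF' hG'
    have h1 : y * g ∈ F.coset := mul_mem_coset hF hy (by simp)
    have h2 : y * g ∈ G.coset := mul_mem_coset hG hy (by simp)
    refine (ih h1 h2).trans ?_
    have h3 := step l hl (y * g) h1 h2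
    simp only [← mul_assoc] at h3
    exact h3 hF' hG'
  | inv_mul_cancel x hx y hy ih =>
    obtain ⟨l, hl, rfl⟩ := hx
    intro hF' hG'
    have hinv : (r l)⁻¹ = r l := inv_eq_of_mul_eq_one_left (hr.sq l)
    simp only [hinv] at hF' hG' ⊢
    have h1 : y * g ∈ F.coset := mul_mem_coset hF hy (by simp)
    have h2 : y * g ∈ G.coset := mul_mem_coset hG hy (by simp)
    refine (ih h1 h2).trans ?_
    have h3 := step l hl (y * g) h1 h2
    simp only [← mul_assoc] at h3
    exact h3 hF' hG'

theorem isAbstractPolytope [Finite A] (hn : -1 ≤ n) (hr : IsStringCGroup_s2 n r) :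
    letI := partialOrder hr
    IsAbstractPolytope n (rk : CosetFace n r → ℤ) := by
  let := partialOrder hr
  have huniv : ∀ {j : ℤ}, (j < 0 ∨ n ≤ j) → standardSubgroup r Set.univ ≤
      standardSubgroup r {j}ᶜ := by
    intro j hj
    refine standardSubgroup_le fun l _ => ?_
    by_cases hl : l = j
    · rw [hl, hr.eq_one j hj]; exact one_mem _
    · exact mem_standardSubgroup hl
  refine ⟨hn, fun h => ((lt_iff hr).1 h).1, ?_, ?_, ?_, ?_, ?_⟩
  · ext j
    constructor
    · rintro ⟨x, rfl⟩; exact x.rk_bounds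
    · intro hj; exact ⟨mk 1 (one_mem _) j hj, rfl⟩
  · refine ⟨mk 1 (one_mem _) (-1) ⟨le_rfl, hn⟩, fun F => ?_⟩
    obtain ⟨g, hg⟩ := F.exists_mem
    refine (le_iff hr).2 ⟨F.rk_bounds.1, g, (mem_iff (mem_mk _ _ _ _) g).2 ?_, hg⟩
    simpa using huniv (j := -1) (by simp) (mem_univ_of_mem hg)
  · refine ⟨mk 1 (one_mem _) n ⟨hn, le_rfl⟩, fun F => ?_⟩
    obtain ⟨g, hg⟩ := F.exists_mem
    refine (le_iff hr).2 ⟨F.rk_bounds.2, g, hg, (mem_iff (mem_mk _ _ _ _) g).2 ?_⟩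
    simpa using huniv (j := n) (by simp) (mem_univ_of_mem hg)
  · intro F G hFG hrk
    obtain ⟨-, g, hF, hG⟩ := (lt_iff hr).1 hFG
    have hgu := mem_univ_of_mem hF
    have hFb := F.rk_bounds
    have hGb := G.rk_bounds
    have hj : -1 ≤ F.rk + 1 ∧ F.rk + 1 ≤ n := by omega
    have hrgu := mul_mem (mem_standardSubgroup (r := r) (Set.mem_univ (F.rk + 1))) hgu
    have hsing := mem_standardSubgroup (r := r) (Set.mem_singleton (F.rk + 1))
    refine ⟨mk g hgu _ hj, mk (r (F.rk + 1) * g) hrgu _ hj, fun h => ?_, fun H => ⟨?_, ?_⟩⟩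
    · have h₁ : r (F.rk + 1) * g ∈ (mk g hgu _ hj : CosetFace n r).coset := by
        rw [h]; exact mem_mk _ _ _ _
      rw [mem_iff (mem_mk _ _ _ _)] at h₁
      refine hr.not_mem (F.rk + 1) (by omega) (by omega) ?_
      simpa using h₁
    · rintro ⟨h₁, h₂⟩
      obtain ⟨h₁, hu₁⟩ := (lt_iff hr).1 h₁
      obtain ⟨h₂, hu₂⟩ := (lt_iff hr).1 h₂
      have hH : H.rk = F.rk + 1 := by omega
      rcases mem_coset_or_of_between hr hF hG hH hrk hu₁ hu₂ with h | h
      · exact Or.inl (eq_of_mem hH h (mem_mk _ _ _ _))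
      · rw [hH] at h
        exact Or.inr (eq_of_mem hH h (mem_mk _ _ _ _))
    · rintro (rfl | rfl)
      · exact ⟨(lt_iff hr).2 ⟨by simp, g, hF, mem_mk _ _ _ _⟩,
          (lt_iff hr).2 ⟨by simp; omega, g, mem_mk _ _ _ _, hG⟩⟩
      · exact ⟨(lt_iff hr).2 ⟨by simp, _, mul_mem_coset hF hsing (by simp), mem_mk _ _ _ _⟩,
          (lt_iff hr).2 ⟨by simp; omega, _, mem_mk _ _ _ _,
            mul_mem_coset hG hsing (by simp; omega)⟩⟩
  · intro F G hFG c d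
    obtain ⟨g, hgF, hgG, rfl⟩ := exists_eq_sectionFlag hr hFG c
    obtain ⟨h, hhF, hhG, rfl⟩ := exists_eq_sectionFlag hr hFG d
    have hw := mul_inv_mem_compl_pair hr hFG.1 hgF hgG hhF hhG
    have := reflTransGen_sectionFlag hr hgF hgG hw
    simp only [inv_mul_cancel_right] at this
    exact this hhF hhG

/-- Every flag of the coset poset consists of the faces containing some group element. -/
theorem exists_forall_mem_flag_iff [Finite A] (hr : IsStringCGroup_s2 n r) :
    letI := partialOrder hr
    ∀ c : Flag (CosetFace n r), ∃ g ∈ standardSubgroup r Set.univ,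
      ∀ x, x ∈ c ↔ g ∈ x.coset := by
  let := partialOrder hr
  intro c
  obtain ⟨g, hgu, hg⟩ := exists_mem_chain hr (Set.toFinite (c : Set (CosetFace n r))).toFinset
    (by rw [Set.Finite.coe_toFinset]; exact c.chain_le)
  simp only [Set.Finite.mem_toFinset] at hg
  refine ⟨g, hgu, fun x => ⟨fun h => hg x h, fun h => Flag.mem_iff_forall_le_or_ge.2 ?_⟩⟩
  intro b hb
  rcases le_total x.rk b.rk with h' | h'
  · exact Or.inl ((le_iff hr).2 ⟨h', g, h, hg b hb⟩)
  · exact Or.inr ((le_iff hr).2 ⟨h', g, hg b hb, h⟩)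

/-- Right translation of faces. -/
def translate (u : A) (hu : u ∈ standardSubgroup r Set.univ) (x : CosetFace n r) :
    CosetFace n r :=
  ⟨(x.rk, {h | h * u ∈ x.coset}), x.rk_bounds, by
    obtain ⟨g, hg⟩ := x.exists_mem
    refine ⟨g * u⁻¹, mul_mem (mem_univ_of_mem hg) (inv_mem hu), ?_⟩
    ext h
    simp [mem_iff hg, mul_assoc]⟩

theorem mem_translate (u : A) (hu : u ∈ standardSubgroup r Set.univ) (x : CosetFace n r) (g : A) :
    g ∈ (x.translate u hu).coset ↔ g * u ∈ x.coset := Iff.rfl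

theorem translate_translate (u v : A) (hu : u ∈ standardSubgroup r Set.univ)
    (hv : v ∈ standardSubgroup r Set.univ) (h : v * u = 1) (x : CosetFace n r) :
    (x.translate u hu).translate v hv = x := by
  obtain ⟨g, hg⟩ := x.exists_mem
  refine eq_of_mem rfl (g := g) ?_ hg
  rw [mem_translate, mem_translate, mul_assoc, h, mul_one]
  exact hg

theorem isRegularPolytope [Finite A] (hr : IsStringCGroup_s2 n r) :
    letI := partialOrder hr
    IsRegularPolytope (P := CosetFace n r) := by
  let := partialOrder hr
  intro c d
  obtain ⟨g, hgu, hg⟩ := exists_forall_mem_flag_iff hr c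
  obtain ⟨h, hhu, hh⟩ := exists_forall_mem_flag_iff hr d
  have hu := mul_mem (inv_mem hhu) hgu
  have hv := mul_mem (inv_mem hgu) hhu
  let e : CosetFace n r ≃ CosetFace n r :=
    { toFun := translate (h⁻¹ * g) hu
      invFun := translate (g⁻¹ * h) hv
      left_inv := translate_translate _ _ _ _ (by group)
      right_inv := translate_translate _ _ _ _ (by group) }
  refine ⟨⟨e, ?_⟩, ?_⟩
  · intro x y
    refine and_congr Iff.rfl ⟨?_, ?_⟩
    · rintro ⟨u, h₁, h₂⟩
      exact ⟨_, h₁, h₂⟩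
    · rintro ⟨u, h₁, h₂⟩
      refine ⟨u * (h⁻¹ * g)⁻¹, ?_, ?_⟩
      · change u * (h⁻¹ * g)⁻¹ * (h⁻¹ * g) ∈ x.coset
        rwa [inv_mul_cancel_right]
      · change u * (h⁻¹ * g)⁻¹ * (h⁻¹ * g) ∈ y.coset
        rwa [inv_mul_cancel_right]
  · change e '' _ = _
    ext x
    rw [e.image_eq_preimage_symm, Set.mem_preimage]
    refine (hg _).trans (Iff.trans ?_ (hh x).symm)
    change g * (g⁻¹ * h) ∈ x.coset ↔ _
    simp

end CosetFace

/-- The restriction of a flag to a section between two of its faces. -/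
def Flag.restrictIcc {P : Type*} [PartialOrder P] (c : Flag P) {F G : P} (hF : F ∈ c)
    (hG : G ∈ c) : Flag ↥(Set.Icc F G) where
  carrier := {x | x.1 ∈ c}
  Chain' := fun x hx y hy _ => c.chain_le.total hx hy
  max_chain' := fun s hs hle => by
    refine Set.Subset.antisymm hle fun x hx => ?_
    refine Flag.mem_iff_forall_le_or_ge.2 fun b hb => ?_
    rcases c.chain_le.total hb hF with h | h
    · exact Or.inr (h.trans x.2.1)
    rcases c.chain_le.total hb hG with hbG | hGb
    · exact hs.total hx (hle (show (⟨b, h, hbG⟩ : ↥(Set.Icc F G)).1 ∈ c from hb))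
    · exact Or.inl (x.2.2.trans hGb)

/-- A flag of a polytope of rank `n`, as a function of the rank (which is truncated to the
interval from `-1` to `n`). -/
@[ext]
structure RankedFlag {P : Type*} [PartialOrder P] (n : ℤ) (rk : P → ℤ) where
  /-- The face of a given rank. -/
  face : ℤ → P
  mono : Monotone face
  rk_face : ∀ l, rk (face l) = max (-1) (min l n)

namespace IsAbstractPolytope

variable {P : Type*} [PartialOrder P] {n : ℤ} {rk : P → ℤ}

theorem rk_mono (hP : IsAbstractPolytope n rk) {x y : P} (h : x ≤ y) : rk x ≤ rk y := by
  rcases h.lt_or_eq with h | rfl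
  · exact (hP.strictMono h).le
  · rfl

theorem eq_of_le_of_rk_eq (hP : IsAbstractPolytope n rk) {x y : P} (h : x ≤ y)
    (hr : rk x = rk y) : x = y := by
  by_contra hne
  exact (hP.strictMono (lt_of_le_of_ne h hne)).ne hr

theorem lt_of_le_of_rk_lt {x y : P} (h : x ≤ y)
    (hr : rk x < rk y) : x < y :=
  lt_of_le_of_ne h (by rintro rfl; exact lt_irrefl _ hr)

theorem rk_bounds (hP : IsAbstractPolytope n rk) (x : P) : -1 ≤ rk x ∧ rk x ≤ n := by
  have : rk x ∈ Set.Icc (-1 : ℤ) n := hP.rank_range ▸ Set.mem_range_self x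
  exact this

theorem eq_of_mem_flag (hP : IsAbstractPolytope n rk) {c : Flag P} {x y : P} (hx : x ∈ c)
    (hy : y ∈ c) (h : rk x = rk y) : x = y := by
  rcases c.chain_le.total hx hy with h' | h'
  · exact hP.eq_of_le_of_rk_eq h' h
  · exact (hP.eq_of_le_of_rk_eq h' h.symm).symm

theorem exists_mem_flag_rk_eq (hP : IsAbstractPolytope n rk) (c : Flag P) {l : ℤ} (h₁ : -1 ≤ l)
    (h₂ : l ≤ n) : ∃ z ∈ c, rk z = l := by
  obtain ⟨B, hB⟩ := hP.exists_bot
  obtain ⟨T, hT⟩ := hP.exists_top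
  have hBm : ∀ d : Flag P, B ∈ d := fun d => Flag.mem_iff_forall_le_or_ge.2 fun b _ => Or.inl (hB b)
  have hTm : ∀ d : Flag P, T ∈ d := fun d => Flag.mem_iff_forall_le_or_ge.2 fun b _ => Or.inr (hT b)
  obtain ⟨x, hx⟩ : l ∈ Set.range rk := hP.rank_range ▸ ⟨h₁, h₂⟩
  obtain ⟨d, hd⟩ := (IsChain.singleton (r := (· ≤ ·)) (a := x)).exists_subset_flag
  have hpath := hP.strongly_connected B T (hB T) (d.restrictIcc (hBm d) (hTm d))
    (c.restrictIcc (hBm c) (hTm c))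
  have key : ∃ z ∈ c.restrictIcc (hBm c) (hTm c), rk z.1 = l := by
    generalize c.restrictIcc (hBm c) (hTm c) = e at hpath ⊢
    induction hpath with
    | refl => exact ⟨⟨x, hB x, hT x⟩, hd rfl, hx⟩
    | @tail c' d' _ hadj ih =>
      obtain ⟨j, hne, hag⟩ := hadj
      obtain ⟨z, hz, hzl⟩ := ih
      by_cases hzd : z ∈ d'
      · exact ⟨z, hzd, hzl⟩
      · have hj : rk z.1 = j := by
          by_contra h
          exact hzd ((hag z h).1 hz)
        rw [Flag.mem_iff_forall_le_or_ge] at hzd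
        push Not at hzd
        obtain ⟨w, hw, hw'⟩ := hzd
        refine ⟨w, hw, ?_⟩
        by_contra h
        have hwc := (hag w fun h' => h (h'.trans (hj.symm.trans hzl))).2 hw
        rcases c'.chain_le.total hz hwc with h | h
        · exact hw'.1 h
        · exact hw'.2 h
  obtain ⟨z, hz, hzl⟩ := key
  exact ⟨z.1, hz, hzl⟩

end IsAbstractPolytope

namespace RankedFlag

variable {P : Type*} [PartialOrder P] {n : ℤ} {rk : P → ℤ}

theorem exists_of_flag (hP : IsAbstractPolytope n rk) (c : Flag P) :
    ∃ φ : RankedFlag n rk, ∀ l, φ.face l ∈ c := by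
  have hn := hP.neg_one_le
  choose f hf hrk using fun l : ℤ =>
    hP.exists_mem_flag_rk_eq c (l := max (-1) (min l n)) (by omega) (by omega)
  refine ⟨⟨f, fun a b hab => ?_, hrk⟩, hf⟩
  rcases c.chain_le.total (hf a) (hf b) with h | h
  · exact h
  · refine (hP.eq_of_le_of_rk_eq h ?_).ge
    have := hP.rk_mono h
    have ha := hrk a
    have hb := hrk b
    omega

theorem face_eq_of_mem (hP : IsAbstractPolytope n rk) {c : Flag P} {φ : RankedFlag n rk}
    (hφ : ∀ l, φ.face l ∈ c) {z : P} (hz : z ∈ c) : φ.face (rk z) = z := by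
  refine hP.eq_of_mem_flag (hφ _) hz ?_
  have := hP.rk_bounds z
  rw [φ.rk_face]
  omega

/-- The set of faces of a ranked flag. -/
def toFlag (hP : IsAbstractPolytope n rk) (φ : RankedFlag n rk) : Flag P where
  carrier := Set.range φ.face
  Chain' := by
    rintro _ ⟨a, rfl⟩ _ ⟨b, rfl⟩ _
    rcases le_total a b with h | h
    · exact Or.inl (φ.mono h)
    · exact Or.inr (φ.mono h)
  max_chain' := fun s hs hle => by
    refine Set.Subset.antisymm hle fun x hx => ⟨rk x, ?_⟩
    have hr : rk (φ.face (rk x)) = rk x := by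
      have := hP.rk_bounds x
      rw [φ.rk_face]
      omega
    rcases hs.total hx (hle ⟨rk x, rfl⟩) with h | h
    · exact (hP.eq_of_le_of_rk_eq h hr.symm).symm
    · exact hP.eq_of_le_of_rk_eq h hr

theorem mem_toFlag (hP : IsAbstractPolytope n rk) (φ : RankedFlag n rk) (l : ℤ) :
    φ.face l ∈ φ.toFlag hP := ⟨l, rfl⟩

theorem finite [Finite P] (hP : IsAbstractPolytope n rk) : Finite (RankedFlag n rk) := by
  refine Finite.of_injective (fun φ : RankedFlag n rk => fun l : Set.Icc (-1 : ℤ) n => φ.face l)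
    fun φ ψ h => ?_
  have hn := hP.neg_one_le
  have key : ∀ (χ : RankedFlag n rk) (l : ℤ), χ.face l = χ.face (max (-1) (min l n)) := by
    intro χ l
    have h₁ := χ.rk_face l
    have h₂ := χ.rk_face (max (-1) (min l n))
    rcases le_total l (max (-1) (min l n)) with h | h
    · exact hP.eq_of_le_of_rk_eq (χ.mono h) (by omega)
    · exact (hP.eq_of_le_of_rk_eq (χ.mono h) (by omega)).symm
  ext l
  rw [key φ l, key ψ l]
  exact congrFun h ⟨max (-1) (min l n), by constructor <;> omega⟩

theorem face_eq_of_outside (hP : IsAbstractPolytope n rk) (φ ψ : RankedFlag n rk) {l : ℤ}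
    (hl : l < 0 ∨ n ≤ l) : φ.face l = ψ.face l := by
  have hn := hP.neg_one_le
  have h₁ := φ.rk_face l
  have h₂ := ψ.rk_face l
  rcases hl with hl | hl
  · obtain ⟨B, hB⟩ := hP.exists_bot
    have hb := hP.rk_bounds B
    have hφ := hP.rk_mono (hB (φ.face l))
    rw [← hP.eq_of_le_of_rk_eq (hB (φ.face l)) (by omega),
      ← hP.eq_of_le_of_rk_eq (hB (ψ.face l)) (by omega)]
  · obtain ⟨T, hT⟩ := hP.exists_top
    have hb := hP.rk_bounds T
    have hφ := hP.rk_mono (hT (φ.face l))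
    rw [hP.eq_of_le_of_rk_eq (hT (φ.face l)) (by omega),
      hP.eq_of_le_of_rk_eq (hT (ψ.face l)) (by omega)]

open Classical in
/-- A face strictly between `a` and `c` other than `b`, if there is one, and `b` otherwise. -/
noncomputable def otherFace (a b c : P) : P :=
  if h : ∃ w, w ≠ b ∧ a < w ∧ w < c then h.choose else b

theorem bounds_of_between (hP : IsAbstractPolytope n rk) (φ : RankedFlag n rk) {l : ℤ} {w : P}
    (h₁ : φ.face (l - 1) < w) (h₂ : w < φ.face (l + 1)) : 0 ≤ l ∧ l < n ∧ rk w = l := by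
  have h₁ := hP.strictMono h₁
  have h₂ := hP.strictMono h₂
  rw [φ.rk_face] at h₁ h₂
  omega

theorem face_lt_face {φ : RankedFlag n rk} {a b : ℤ} (hab : a < b) (ha : -1 ≤ a) (hb : b ≤ n) :
    φ.face a < φ.face b := by
  refine IsAbstractPolytope.lt_of_le_of_rk_lt (rk := rk) (φ.mono hab.le) ?_
  rw [φ.rk_face, φ.rk_face]
  omega

theorem between_unique (hP : IsAbstractPolytope n rk) (φ : RankedFlag n rk) {l : ℤ} {w w' : P}
    (hw : w ≠ φ.face l) (h₁ : φ.face (l - 1) < w) (h₂ : w < φ.face (l + 1))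
    (hw' : w' ≠ φ.face l) (h₁' : φ.face (l - 1) < w') (h₂' : w' < φ.face (l + 1)) : w = w' := by
  obtain ⟨hl₁, hl₂, -⟩ := bounds_of_between hP φ h₁ h₂
  obtain ⟨H₁, H₂, hne, H⟩ := hP.diamond (φ.face (l - 1)) (φ.face (l + 1)) (h₁.trans h₂) (by
    rw [φ.rk_face, φ.rk_face]; omega)
  have a := (H w).1 ⟨h₁, h₂⟩
  have b := (H w').1 ⟨h₁', h₂'⟩
  have c := (H (φ.face l)).1 ⟨face_lt_face (by omega) (by omega) (by omega),
    face_lt_face (by omega) (by omega) (by omega)⟩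
  grind

theorem otherFace_eq (hP : IsAbstractPolytope n rk) (φ : RankedFlag n rk) {l : ℤ} {w : P}
    (hw : w ≠ φ.face l) (h₁ : φ.face (l - 1) < w) (h₂ : w < φ.face (l + 1)) :
    otherFace (φ.face (l - 1)) (φ.face l) (φ.face (l + 1)) = w := by
  have h : ∃ w, w ≠ φ.face l ∧ φ.face (l - 1) < w ∧ w < φ.face (l + 1) := ⟨w, hw, h₁, h₂⟩
  rw [otherFace, dif_pos h]
  exact between_unique hP φ h.choose_spec.1 h.choose_spec.2.1 h.choose_spec.2.2 hw h₁ h₂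

theorem otherFace_spec (φ : RankedFlag n rk) (l : ℤ) :
    (otherFace (φ.face (l - 1)) (φ.face l) (φ.face (l + 1)) = φ.face l ∧
      ¬ ∃ w, w ≠ φ.face l ∧ φ.face (l - 1) < w ∧ w < φ.face (l + 1)) ∨
    (otherFace (φ.face (l - 1)) (φ.face l) (φ.face (l + 1)) ≠ φ.face l ∧
      φ.face (l - 1) < otherFace (φ.face (l - 1)) (φ.face l) (φ.face (l + 1)) ∧
      otherFace (φ.face (l - 1)) (φ.face l) (φ.face (l + 1)) < φ.face (l + 1)) := by
  by_cases h : ∃ w, w ≠ φ.face l ∧ φ.face (l - 1) < w ∧ w < φ.face (l + 1)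
  · right
    rw [otherFace, dif_pos h]
    exact h.choose_spec
  · left
    rw [otherFace, dif_neg h]
    exact ⟨rfl, h⟩

/-- The flag which differs from `φ` in the face of rank `l`, if there is one. -/
noncomputable def flip (hP : IsAbstractPolytope n rk) (l : ℤ) (φ : RankedFlag n rk) :
    RankedFlag n rk where
  face := Function.update φ.face l (otherFace (φ.face (l - 1)) (φ.face l) (φ.face (l + 1)))
  mono := by
    have h : φ.face (l - 1) ≤ otherFace (φ.face (l - 1)) (φ.face l) (φ.face (l + 1)) ∧
        otherFace (φ.face (l - 1)) (φ.face l) (φ.face (l + 1)) ≤ φ.face (l + 1) := by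
      rcases otherFace_spec φ l with h | h
      · rw [h.1]; exact ⟨φ.mono (by omega), φ.mono (by omega)⟩
      · exact ⟨h.2.1.le, h.2.2.le⟩
    intro a b hab
    by_cases ha : a = l <;> by_cases hb : b = l
    · rw [ha, hb]
    · subst ha
      rw [Function.update_self, Function.update_of_ne hb]
      exact h.2.trans (φ.mono (by omega))
    · subst hb
      rw [Function.update_self, Function.update_of_ne ha]
      exact (φ.mono (by omega)).trans h.1
    · rw [Function.update_of_ne hb, Function.update_of_ne ha]
      exact φ.mono hab
  rk_face := by
    intro m
    by_cases hm : m = l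
    · subst hm
      rw [Function.update_self]
      rcases otherFace_spec φ m with h | h
      · rw [h.1, φ.rk_face]
      · have := bounds_of_between hP φ h.2.1 h.2.2
        omega
    · rw [Function.update_of_ne hm, φ.rk_face]

variable (hP : IsAbstractPolytope n rk)

theorem flip_face_self (l : ℤ) (φ : RankedFlag n rk) : (φ.flip hP l).face l =
    otherFace (φ.face (l - 1)) (φ.face l) (φ.face (l + 1)) := Function.update_self ..

theorem flip_face_of_ne {l m : ℤ} (h : m ≠ l) (φ : RankedFlag n rk) :
    (φ.flip hP l).face m = φ.face m := Function.update_of_ne h ..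

theorem flip_face_self_eq (φ : RankedFlag n rk) {l : ℤ} {w : P}
    (hw : w ≠ φ.face l) (h₁ : φ.face (l - 1) < w) (h₂ : w < φ.face (l + 1)) :
    (φ.flip hP l).face l = w := by
  rw [flip_face_self, otherFace_eq hP φ hw h₁ h₂]

theorem flip_flip (l : ℤ) (φ : RankedFlag n rk) : (φ.flip hP l).flip hP l = φ := by
  ext m
  by_cases hm : m = l
  · subst hm
    rcases otherFace_spec φ m with h | h
    · have he : φ.flip hP m = φ := by
        ext p
        by_cases hp : p = m
        · subst hp; rw [flip_face_self, h.1]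
        · rw [flip_face_of_ne hP hp]
      rw [he, he]
    · obtain ⟨h₁, h₂, -⟩ := bounds_of_between hP φ h.2.1 h.2.2
      apply flip_face_self_eq
      · rw [flip_face_self]; exact h.1.symm
      · rw [flip_face_of_ne hP (by omega)]
        exact face_lt_face (by omega) (by omega) (by omega)
      · rw [flip_face_of_ne hP (by omega)]
        exact face_lt_face (by omega) (by omega) (by omega)
  · rw [flip_face_of_ne hP hm, flip_face_of_ne hP hm]

theorem flip_comm {i j : ℤ} (hij : i + 2 ≤ j) (φ : RankedFlag n rk) :
    (φ.flip hP j).flip hP i = (φ.flip hP i).flip hP j := by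
  ext m
  by_cases hi : m = i
  · subst hi
    rw [flip_face_of_ne hP (show m ≠ j by omega)]
    simp only [flip_face_self]
    rw [flip_face_of_ne hP (by omega), flip_face_of_ne hP (by omega),
      flip_face_of_ne hP (by omega)]
  · by_cases hj : m = j
    · subst hj
      rw [flip_face_of_ne hP hi]
      simp only [flip_face_self]
      rw [flip_face_of_ne hP (by omega), flip_face_of_ne hP (by omega),
        flip_face_of_ne hP (by omega)]
    · rw [flip_face_of_ne hP hi, flip_face_of_ne hP hj, flip_face_of_ne hP hj,
        flip_face_of_ne hP hi]

theorem flip_of_outside {l : ℤ} (hl : l < 0 ∨ n ≤ l) (φ : RankedFlag n rk) : φ.flip hP l = φ := by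
  ext m
  by_cases hm : m = l
  · subst hm; exact face_eq_of_outside hP _ _ hl
  · exact flip_face_of_ne hP hm φ

theorem flip_face_self_ne {l : ℤ} (h₁ : 0 ≤ l) (h₂ : l < n) (φ : RankedFlag n rk) :
    (φ.flip hP l).face l ≠ φ.face l := by
  obtain ⟨H₁, H₂, hne, H⟩ := hP.diamond (φ.face (l - 1)) (φ.face (l + 1))
    (face_lt_face (by omega) (by omega) (by omega)) (by
      rw [φ.rk_face, φ.rk_face]; omega)
  have : ∃ w, w ≠ φ.face l ∧ φ.face (l - 1) < w ∧ w < φ.face (l + 1) := by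
    by_cases h : H₁ = φ.face l
    · exact ⟨H₂, fun h' => hne (h.trans h'.symm), (H H₂).2 (Or.inr rfl)⟩
    · exact ⟨H₁, h, (H H₁).2 (Or.inl rfl)⟩
  obtain ⟨w, hw, hw'⟩ := this
  rw [flip_face_self_eq hP φ hw hw'.1 hw'.2]
  exact hw

/-- Reachability by flips in ranks belonging to `S`. -/
def Reach (S : Set ℤ) : RankedFlag n rk → RankedFlag n rk → Prop :=
  Relation.ReflTransGen fun φ ψ => ∃ l ∈ S, ψ = φ.flip hP l

theorem Reach.mono {S T : Set ℤ} (h : S ⊆ T) {φ ψ : RankedFlag n rk} (hr : Reach hP S φ ψ) :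
    Reach hP T φ ψ :=
  Relation.ReflTransGen.mono (fun _ _ ⟨l, hl, e⟩ => ⟨l, h hl, e⟩) _ _ hr

theorem reach_Ioo {i j : ℤ} (hi : -1 ≤ i) (hij : i ≤ j) (hj : j ≤ n) {φ ψ : RankedFlag n rk}
    (hφψ : ∀ l ∉ Set.Ioo i j, φ.face l = ψ.face l) : Reach hP (Set.Ioo i j) φ ψ := by
  have hiψ : φ.face i ∈ ψ.toFlag hP := by
    rw [hφψ i (by simp)]; exact mem_toFlag ..
  have hjψ : φ.face j ∈ ψ.toFlag hP := by
    rw [hφψ j (by simp)]; exact mem_toFlag ..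
  have hpath := hP.strongly_connected (φ.face i) (φ.face j) (φ.mono hij)
    ((φ.toFlag hP).restrictIcc (mem_toFlag hP φ i) (mem_toFlag hP φ j))
    ((ψ.toFlag hP).restrictIcc hiψ hjψ)
  have key : ∃ θ : RankedFlag n rk, Reach hP (Set.Ioo i j) φ θ ∧
      (∀ l ∉ Set.Ioo i j, θ.face l = φ.face l) ∧
      ∀ x : ↥(Set.Icc (φ.face i) (φ.face j)), (∃ l, i ≤ l ∧ l ≤ j ∧ θ.face l = x.1) →
        x ∈ (ψ.toFlag hP).restrictIcc hiψ hjψ := by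
    generalize (ψ.toFlag hP).restrictIcc hiψ hjψ = e at hpath ⊢
    induction hpath with
    | refl =>
      refine ⟨φ, Relation.ReflTransGen.refl, fun _ _ => rfl, ?_⟩
      rintro x ⟨l, -, -, hl⟩
      exact ⟨l, hl⟩
    | @tail c d _ hadj ih =>
      obtain ⟨m, hne, hag⟩ := hadj
      obtain ⟨θ, hθ, hout, hmem⟩ := ih
      have hθi : θ.face i = φ.face i := hout i (by simp)
      have hθj : θ.face j = φ.face j := hout j (by simp)
      have hIcc : ∀ l, i ≤ l → l ≤ j → θ.face l ∈ Set.Icc (φ.face i) (φ.face j) := fun l h h' =>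
        ⟨hθi ▸ θ.mono h, hθj ▸ θ.mono h'⟩
      have hrkθ : ∀ l, i ≤ l → l ≤ j → rk (θ.face l) = l := fun l h h' => by
        rw [θ.rk_face]; omega
      have hceq : ∀ x ∈ c, θ.face (rk x.1) = x.1 := by
        intro x hx
        have h₁ := hP.rk_mono x.2.1
        have h₂ := hP.rk_mono x.2.2
        rw [φ.rk_face] at h₁ h₂
        have hy := hmem ⟨_, hIcc (rk x.1) (by omega) (by omega)⟩
          ⟨rk x.1, by omega, by omega, rfl⟩
        have hr := hrkθ (rk x.1) (by omega) (by omega)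
        rcases c.chain_le.total hx hy with h | h
        · exact (hP.eq_of_le_of_rk_eq h hr.symm).symm
        · exact hP.eq_of_le_of_rk_eq h hr
      have hw : ∃ w ∈ d, w ∉ c := by
        by_contra! h
        exact hne (SetLike.coe_injective (d.max_chain' c.Chain' h)).symm
      obtain ⟨w, hwd, hwc⟩ := hw
      have hwm : rk w.1 = m := by
        by_contra h
        exact hwc ((hag w h).2 hwd)
      have hwi := hP.rk_mono w.2.1
      have hwj := hP.rk_mono w.2.2
      rw [φ.rk_face] at hwi hwj
      have him : i < m := by
        refine lt_of_le_of_ne (by omega) fun h => hwc ?_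
        refine hmem w ⟨i, le_rfl, hij, ?_⟩
        rw [hθi]
        exact hP.eq_of_le_of_rk_eq w.2.1 (by rw [φ.rk_face]; omega)
      have hmj : m < j := by
        refine lt_of_le_of_ne (by omega) fun h => hwc ?_
        refine hmem w ⟨j, hij, le_rfl, ?_⟩
        rw [hθj]
        exact (hP.eq_of_le_of_rk_eq w.2.2 (by rw [φ.rk_face]; omega)).symm
      have hd : ∀ l (h : i ≤ l) (h' : l ≤ j), l ≠ m →
          (⟨θ.face l, hIcc l h h'⟩ : ↥(Set.Icc (φ.face i) (φ.face j))) ∈ d := fun l h h' hl =>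
        (hag _ (by change rk (θ.face l) ≠ m; rwa [hrkθ l h h'])).1 (hmem _ ⟨l, h, h', rfl⟩)
      have hflip : (θ.flip hP m).face m = w.1 := by
        refine flip_face_self_eq hP θ (fun h => ?_) ?_ ?_
        · exact hwc (hmem w ⟨m, him.le, hmj.le, h.symm⟩)
        · have hr := hrkθ (m - 1) (by omega) (by omega)
          refine IsAbstractPolytope.lt_of_le_of_rk_lt (rk := rk) ?_ (by omega)
          rcases d.chain_le.total (hd (m - 1) (by omega) (by omega) (by omega)) hwd with h | h
          · exact h
          · have := hP.rk_mono h
            simp only at this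
            omega
        · have hr := hrkθ (m + 1) (by omega) (by omega)
          refine IsAbstractPolytope.lt_of_le_of_rk_lt (rk := rk) ?_ (by omega)
          rcases d.chain_le.total hwd (hd (m + 1) (by omega) (by omega) (by omega)) with h | h
          · exact h
          · have := hP.rk_mono h
            simp only at this
            omega
      refine ⟨θ.flip hP m, hθ.tail ⟨m, ⟨him, hmj⟩, rfl⟩, fun l hl => ?_, ?_⟩
      · rw [flip_face_of_ne hP (by rintro rfl; exact hl ⟨him, hmj⟩), hout l hl]
      · rintro x ⟨l, hl, hl', hx⟩
        by_cases hlm : l = m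
        · subst hlm
          rw [hflip] at hx
          rwa [← Subtype.ext hx]
        · rw [flip_face_of_ne hP hlm] at hx
          have := hd l hl hl' hlm
          rwa [show (⟨θ.face l, hIcc l hl hl'⟩ : ↥(Set.Icc (φ.face i) (φ.face j))) = x from
            Subtype.ext hx] at this
  obtain ⟨θ, hθ, hout, hmem⟩ := key
  have : θ = ψ := by
    ext l
    by_cases hl : l ∈ Set.Ioo i j
    · have h := hmem ⟨θ.face l, hout i (by simp) ▸ θ.mono hl.1.le,
        hout j (by simp) ▸ θ.mono hl.2.le⟩ ⟨l, hl.1.le, hl.2.le, rfl⟩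
      refine hP.eq_of_mem_flag (c := ψ.toFlag hP) h (mem_toFlag ..) ?_
      rw [θ.rk_face, ψ.rk_face]
    · rw [hout l hl, hφψ l hl]
  rwa [this] at hθ

theorem reach_of_eq_off {S : Set ℤ} {φ ψ : RankedFlag n rk}
    (hφψ : ∀ l ∉ S, φ.face l = ψ.face l) : Reach hP S φ ψ := by
  have hn := hP.neg_one_le
  suffices key : ∀ m : ℤ, -1 ≤ m → ∀ φ ψ : RankedFlag n rk,
      (∀ l ∉ S, φ.face l = ψ.face l) → (∀ l, m ≤ l → φ.face l = ψ.face l) →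
      Reach hP S φ ψ from
    key n hn φ ψ hφψ fun l hl => face_eq_of_outside hP _ _ (Or.inr hl)
  intro m hm
  induction m, hm using Int.leInduction with
  | base =>
    intro φ ψ _ h
    have : φ = ψ := by
      ext l
      rcases lt_or_ge l 0 with hl | hl
      · exact face_eq_of_outside hP _ _ (Or.inl hl)
      · exact h l (by omega)
    rw [this]
    exact Relation.ReflTransGen.refl
  | succ m hm ih =>
    intro φ ψ hS hge
    by_cases hmm : φ.face m = ψ.face m
    · refine ih φ ψ hS fun l hl => ?_
      rcases hl.lt_or_eq with h | rfl
      · exact hge l h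
      · exact hmm
    · have hmS : m ∈ S := by
        by_contra h
        exact hmm (hS m h)
      have hm0 : 0 ≤ m ∧ m < n := by
        by_contra h
        exact hmm (face_eq_of_outside hP _ _ (by omega))
      obtain ⟨i, ⟨him, hi⟩, hmax⟩ := Int.exists_greatest_of_bdd
        (P := fun i => i < m ∧ (i ∉ S ∨ i = -1)) ⟨m, fun z hz => hz.1.le⟩
        ⟨-1, by omega, Or.inr rfl⟩
      have hi1 : -1 ≤ i := hmax (-1) ⟨by omega, Or.inr rfl⟩
      have hieq : φ.face i = ψ.face i := by
        rcases hi with h | h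
        · exact hS i h
        · exact face_eq_of_outside hP _ _ (by omega)
      let θ : RankedFlag n rk :=
        { face := fun l => if l ≤ i then φ.face l else ψ.face l
          mono := by
            intro a b hab
            dsimp only
            split_ifs with h₁ h₂ h₂
            · exact φ.mono hab
            · exact (φ.mono h₁).trans (hieq.trans_le (ψ.mono (by omega)))
            · omega
            · exact ψ.mono hab
          rk_face := by
            intro l
            split_ifs
            · exact φ.rk_face l
            · exact ψ.rk_face l }
      have hθ₁ : ∀ l, l ≤ i → θ.face l = φ.face l := fun l hl => if_pos hl
      have hθ₂ : ∀ l, i < l → θ.face l = ψ.face l := fun l hl => if_neg (by omega)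
      have h₁ : Reach hP S φ θ := by
        refine Reach.mono hP ?_ (reach_Ioo hP hi1 (show i ≤ m + 1 by omega) (by omega) ?_)
        · rintro l ⟨hl, hl'⟩
          by_contra hlS
          have : l ≠ m := by rintro rfl; exact hlS hmS
          have := hmax l ⟨by omega, Or.inl hlS⟩
          omega
        · intro l hl
          simp only [Set.mem_Ioo, not_and, not_lt] at hl
          by_cases h : l ≤ i
          · rw [hθ₁ l h]
          · rw [hθ₂ l (by omega), hge l (hl (by omega))]
      refine h₁.trans (ih θ ψ (fun l hl => ?_) fun l hl => hθ₂ l (by omega))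
      by_cases h : l ≤ i
      · rw [hθ₁ l h, hS l hl]
      · exact hθ₂ l (by omega)

/-- A ranked flag through two incident faces below a face of a given one, which agrees with the
latter from there on. -/
theorem exists_through (hP : IsAbstractPolytope n rk) {k : ℤ} (χ : RankedFlag n rk) {x y : P}
    (hxy : x ≤ y) (hy : y ≤ χ.face k) : ∃ θ : RankedFlag n rk, (∀ l, k ≤ l → θ.face l = χ.face l) ∧
      θ.face (rk x) = x ∧ θ.face (rk y) = y := by
  have hchain : IsChain (· ≤ ·) (insert x (insert y (χ.face '' Set.Ici k))) := by
    refine (IsChain.insert ?_ ?_).insert ?_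
    · rintro _ ⟨a, -, rfl⟩ _ ⟨b, -, rfl⟩ _
      rcases le_total a b with h | h
      · exact Or.inl (χ.mono h)
      · exact Or.inr (χ.mono h)
    · rintro _ ⟨a, ha, rfl⟩ _
      exact Or.inl (hy.trans (χ.mono ha))
    · rintro _ (rfl | ⟨a, ha, rfl⟩) _
      · exact Or.inl hxy
      · exact Or.inl (hxy.trans (hy.trans (χ.mono ha)))
  obtain ⟨c, hc⟩ := hchain.exists_subset_flag
  obtain ⟨θ, hθ⟩ := exists_of_flag hP c
  refine ⟨θ, fun l hl => ?_, face_eq_of_mem hP hθ (hc (by simp)),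
    face_eq_of_mem hP hθ (hc (by simp))⟩
  exact hP.eq_of_mem_flag (hθ l) (hc (Or.inr (Or.inr ⟨l, hl, rfl⟩))) (by
    rw [θ.rk_face, χ.rk_face])

end RankedFlag

namespace RankedFlag

variable {P : Type*} [PartialOrder P] {n k : ℤ} {rk : P → ℤ} (hP : IsAbstractPolytope n rk)

/-- Flipping the face of rank `l`, as a permutation of the flags. -/
noncomputable def flipPerm (l : ℤ) : Equiv.Perm (RankedFlag n rk) :=
  Function.Involutive.toPerm (flip hP l) (flip_flip hP l)

@[simp] theorem flipPerm_apply (l : ℤ) (φ : RankedFlag n rk) : flipPerm hP l φ = φ.flip hP l := rfl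

variable (k) in
/-- The tuple, indexed by the ranks `m` from `k` to `n`, of the permutations `flipPerm l`, those
with `m ≤ l` being replaced by the identity. -/
noncomputable def cutFlip (l : ℤ) : ↥(Set.Icc k n) → Equiv.Perm (RankedFlag n rk) :=
  fun m => if l < m.1 then flipPerm hP l else 1

theorem cutFlip_apply_of_lt {l : ℤ} {m : ↥(Set.Icc k n)} (h : l < m.1) :
    cutFlip k hP l m = flipPerm hP l := if_pos h

theorem cutFlip_apply_of_le {l : ℤ} {m : ↥(Set.Icc k n)} (h : m.1 ≤ l) :
    cutFlip k hP l m = 1 := if_neg (by omega)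

theorem cutFlip_apply_eq (l : ℤ) (m : ↥(Set.Icc k n)) :
    cutFlip k hP l m = flipPerm hP l ∨ cutFlip k hP l m = 1 := by
  rcases lt_or_ge l m.1 with h | h
  · exact Or.inl (cutFlip_apply_of_lt hP h)
  · exact Or.inr (cutFlip_apply_of_le hP h)

theorem cutFlip_apply_last (hkn : k ≤ n) (l : ℤ) :
    cutFlip k hP l ⟨n, hkn, le_rfl⟩ = flipPerm hP l := by
  rcases lt_or_ge l n with h | h
  · exact cutFlip_apply_of_lt hP h
  · rw [cutFlip_apply_of_le hP h]
    ext φ : 1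
    exact (flip_of_outside hP (Or.inr h) φ).symm

theorem face_apply_of_mem {S : Set ℤ} {g : ↥(Set.Icc k n) → Equiv.Perm (RankedFlag n rk)}
    (hg : g ∈ standardSubgroup (cutFlip k hP) S) (m : ↥(Set.Icc k n)) (φ : RankedFlag n rk) {l : ℤ}
    (hl : l ∉ S) : (g m φ).face l = φ.face l := by
  induction hg using Subgroup.closure_induction generalizing φ with
  | mem x hx =>
    obtain ⟨i, hi, rfl⟩ := hx
    rcases cutFlip_apply_eq hP i m with h | h
    · rw [h, flipPerm_apply, flip_face_of_ne hP (by rintro rfl; exact hl hi)]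
    · rw [h, Equiv.Perm.one_apply]
  | one => rfl
  | mul x y _ _ hx hy => rw [Pi.mul_apply, Equiv.Perm.mul_apply, hx, hy]
  | inv x _ hx => rw [← hx, Pi.inv_apply, Equiv.Perm.coe_inv, Equiv.apply_symm_apply]

theorem exists_mem_of_eq_off (hkn : k ≤ n) {S : Set ℤ} {φ ψ : RankedFlag n rk}
    (hφψ : ∀ l ∉ S, φ.face l = ψ.face l) :
    ∃ w ∈ standardSubgroup (cutFlip k hP) S, w ⟨n, hkn, le_rfl⟩ φ = ψ := by
  have h := reach_of_eq_off hP hφψ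
  unfold Reach at h
  clear hφψ
  induction h with
  | refl => exact ⟨1, one_mem _, rfl⟩
  | tail _ hstep ih =>
    obtain ⟨l, hl, rfl⟩ := hstep
    obtain ⟨w, hw, rfl⟩ := ih
    refine ⟨cutFlip k hP l * w, mul_mem (mem_standardSubgroup hl) hw, ?_⟩
    rw [Pi.mul_apply, Equiv.Perm.mul_apply, cutFlip_apply_last hP hkn, flipPerm_apply]

theorem apply_eq_apply_of_mem {g : ↥(Set.Icc k n) → Equiv.Perm (RankedFlag n rk)}
    (hg : g ∈ standardSubgroup (cutFlip k hP) (Set.Iio k)) (m m' : ↥(Set.Icc k n)) :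
    g m = g m' := by
  induction hg using Subgroup.closure_induction with
  | mem x hx =>
    obtain ⟨i, hi, rfl⟩ := hx
    rw [cutFlip_apply_of_lt hP (lt_of_lt_of_le hi m.2.1),
      cutFlip_apply_of_lt hP (lt_of_lt_of_le hi m'.2.1)]
  | one => rfl
  | mul x y _ _ hx hy => rw [Pi.mul_apply, Pi.mul_apply, hx, hy]
  | inv x _ hx => rw [Pi.inv_apply, Pi.inv_apply, hx]

theorem exists_retraction {m : ℤ} (hkm : k ≤ m) (hmn : m ≤ n) :
    ∃ π : (↥(Set.Icc k n) → Equiv.Perm (RankedFlag n rk)) →*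
        (↥(Set.Icc k n) → Equiv.Perm (RankedFlag n rk)),
      (∀ i, i < m → π (cutFlip k hP i) = cutFlip k hP i) ∧
        ∀ i, m ≤ i → π (cutFlip k hP i) = 1 := by
  have hmem : ∀ m' : ↥(Set.Icc k n), min m m'.1 ∈ Set.Icc k n := fun m' =>
    ⟨le_min hkm m'.2.1, (min_le_left _ _).trans hmn⟩
  refine ⟨MonoidHom.mk' (fun g m' => g ⟨min m m'.1, hmem m'⟩) fun _ _ => rfl,
    fun i hi => ?_, fun i hi => ?_⟩
  · funext m'
    rcases lt_or_ge i m'.1 with h | h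
    · exact (cutFlip_apply_of_lt hP (lt_min hi h)).trans (cutFlip_apply_of_lt hP h).symm
    · exact (cutFlip_apply_of_le hP ((min_le_right _ _).trans h)).trans
        (cutFlip_apply_of_le hP h).symm
  · funext m'
    exact cutFlip_apply_of_le hP ((min_le_left _ _).trans hi)

/-- The isomorphism `e` maps the faces of `φ` of rank at most `k` to those of `ψ`. -/
structure Corresponds (k : ℤ) {F G : P} (e : ↥(Set.Iic F) ≃o ↥(Set.Iic G))
    (φ ψ : RankedFlag n rk) : Prop where
  left : φ.face k = F
  right : ψ.face k = G
  map : ∀ l, -1 ≤ l → l ≤ k → ∀ x : ↥(Set.Iic F), x.1 = φ.face l → (e x).1 = ψ.face l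

theorem Corresponds.flip (hkn : k ≤ n) {F G : P} {e : ↥(Set.Iic F) ≃o ↥(Set.Iic G)}
    {φ ψ : RankedFlag n rk} (h : Corresponds k e φ ψ) {l : ℤ} (hl : l < k) :
    Corresponds k e (φ.flip hP l) (ψ.flip hP l) := by
  by_cases hl0 : l < 0
  · rwa [flip_of_outside hP (Or.inl hl0), flip_of_outside hP (Or.inl hl0)]
  have hle : ∀ a, a ≤ k → φ.face a ≤ F := fun a ha => h.left ▸ φ.mono ha
  refine ⟨by rw [flip_face_of_ne hP hl.ne', h.left], by rw [flip_face_of_ne hP hl.ne', h.right],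
    fun m hm hmk x hx => ?_⟩
  by_cases hml : m = l
  · subst hml
    have h₁ : φ.face (m - 1) < x.1 := by
      rw [hx, ← flip_face_of_ne hP (show m - 1 ≠ m by omega)]
      exact face_lt_face (by omega) (by omega) (by omega)
    have h₂ : x.1 < φ.face (m + 1) := by
      rw [hx, ← flip_face_of_ne hP (show m + 1 ≠ m by omega)]
      exact face_lt_face (by omega) (by omega) (by omega)
    refine (flip_face_self_eq hP ψ ?_ ?_ ?_).symm
    · rw [← h.map m hm hmk ⟨φ.face m, hle m hmk⟩ rfl]
      intro he
      have := congrArg Subtype.val (e.injective (Subtype.ext he))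
      exact flip_face_self_ne hP (by omega) (by omega) φ (hx.symm.trans this)
    · rw [← h.map (m - 1) (by omega) (by omega) ⟨φ.face (m - 1), hle _ (by omega)⟩ rfl]
      exact e.strictMono h₁
    · rw [← h.map (m + 1) (by omega) (by omega) ⟨φ.face (m + 1), hle _ (by omega)⟩ rfl]
      exact e.strictMono h₂
  · rw [flip_face_of_ne hP hml] at hx ⊢
    exact h.map m hm hmk x hx

theorem corresponds_apply_iff (hkn : k ≤ n) {F G : P} {e : ↥(Set.Iic F) ≃o ↥(Set.Iic G)}
    {g : ↥(Set.Icc k n) → Equiv.Perm (RankedFlag n rk)}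
    (hg : g ∈ standardSubgroup (cutFlip k hP) (Set.Iio k)) (m : ↥(Set.Icc k n))
    (φ ψ : RankedFlag n rk) : Corresponds k e (g m φ) (g m ψ) ↔ Corresponds k e φ ψ := by
  induction hg using Subgroup.closure_induction generalizing φ ψ with
  | mem x hx =>
    obtain ⟨i, hi, rfl⟩ := hx
    rw [cutFlip_apply_of_lt hP (lt_of_lt_of_le hi m.2.1), flipPerm_apply, flipPerm_apply]
    refine ⟨fun h => ?_, fun h => h.flip hP hkn hi⟩
    simpa only [flip_flip] using h.flip hP hkn hi
  | one => rfl
  | mul x y _ _ hx hy =>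
    rw [Pi.mul_apply, Equiv.Perm.mul_apply, Equiv.Perm.mul_apply, hx, hy]
  | inv x _ hx =>
    rw [← hx, Pi.inv_apply, Equiv.Perm.coe_inv, Equiv.apply_symm_apply, Equiv.apply_symm_apply]

/-- The faces of a ranked flag below its face of rank `k`. -/
def toFlagIic (hkn : k ≤ n) (φ : RankedFlag n rk) : Flag ↥(Set.Iic (φ.face k)) where
  carrier := {x | ∃ l, φ.face l = x.1}
  Chain' := by
    rintro ⟨_, h⟩ ⟨a, rfl⟩ ⟨_, h'⟩ ⟨b, rfl⟩ _
    rcases le_total a b with h | h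
    · exact Or.inl (φ.mono h)
    · exact Or.inr (φ.mono h)
  max_chain' := fun s hs hle => by
    refine Set.Subset.antisymm hle fun x hx => ⟨rk x.1, ?_⟩
    have hb := hP.rk_bounds x.1
    have hk := hP.rk_mono x.2
    have hr : rk (φ.face (rk x.1)) = rk x.1 := by
      rw [φ.rk_face]
      omega
    have hn := hP.neg_one_le
    rw [φ.rk_face] at hk
    have hlek : φ.face (rk x.1) ≤ φ.face k := by
      rcases le_total (rk x.1) k with h | h
      · exact φ.mono h
      · exact (hP.eq_of_le_of_rk_eq (φ.mono h) (by rw [φ.rk_face, φ.rk_face]; omega)).ge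
    rcases hs.total hx (hle (show ⟨φ.face (rk x.1), hlek⟩ ∈ _ from ⟨rk x.1, rfl⟩)) with h | h
    · exact (hP.eq_of_le_of_rk_eq h hr.symm).symm
    · exact hP.eq_of_le_of_rk_eq h hr

theorem eq_of_strictMono_of_bounds {a b : ℤ} {f : ℤ → ℤ}
    (hf : ∀ l, a ≤ l → l < b → f l < f (l + 1)) (ha : ∀ l, a ≤ l → l ≤ b → a ≤ f l ∧ f l ≤ b)
    {l : ℤ} (hal : a ≤ l) (hlb : l ≤ b) : f l = l := by
  have h₁ : ∀ m, a ≤ m → m ≤ b → m ≤ f m := by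
    intro m hm
    induction m, hm using Int.leInduction with
    | base => exact fun h => (ha a le_rfl h).1
    | succ m hm ih =>
      intro h
      have := hf m hm (by omega)
      have := ih (by omega)
      omega
  have h₂ : ∀ d : ℕ, ∀ m, a ≤ m → m + d = b → f m ≤ m := by
    intro d
    induction d with
    | zero =>
      intro m hm h
      have := ha m hm (by omega)
      omega
    | succ d ih =>
      intro m hm h
      have := hf m hm (by omega)
      have := ih (m + 1) (by omega) (by omega)
      omega
  exact le_antisymm (h₂ (b - l).toNat l hal (by omega)) (h₁ l hal hlb)

theorem exists_corresponds (hP : IsAbstractPolytope n rk) {K : Type*} [PartialOrder K]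
    (hKreg : IsRegularPolytope (P := K))
    (hk : -1 ≤ k) (hkn : k ≤ n) (φ ψ : RankedFlag n rk)
    (i₁ : ↥(Set.Iic (φ.face k)) ≃o K) (i₂ : ↥(Set.Iic (ψ.face k)) ≃o K) :
    ∃ e : ↥(Set.Iic (φ.face k)) ≃o ↥(Set.Iic (ψ.face k)), Corresponds k e φ ψ := by
  obtain ⟨α, hα⟩ := hKreg (Flag.map i₁ (φ.toFlagIic hP hkn)) (Flag.map i₂ (ψ.toFlagIic hP hkn))
  rw [Flag.coe_map, Flag.coe_map] at hα
  let e := (i₁.trans α).trans i₂.symm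
  refine ⟨e, rfl, rfl, fun l hl hlk => ?_⟩
  have hmem : ∀ x : ↥(Set.Iic (φ.face k)), (∃ l, φ.face l = x.1) → ∃ l, ψ.face l = (e x).1 := by
    intro x hx
    have : α (i₁ x) ∈ i₂ '' (ψ.toFlagIic hP hkn : Set _) :=
      hα ▸ ⟨i₁ x, ⟨x, hx, rfl⟩, rfl⟩
    obtain ⟨y, hy, hyx⟩ := this
    have : e x = y := by simp [e, ← hyx]
    rw [this]
    exact hy
  have hle : ∀ l, φ.face (min l k) ≤ φ.face k := fun l => φ.mono (min_le_right _ _)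
  have hrk : ∀ l, -1 ≤ l → l ≤ k → rk (e ⟨φ.face (min l k), hle l⟩).1 = l := by
    intro l hl hlk
    refine eq_of_strictMono_of_bounds (f := fun l => rk (e ⟨φ.face (min l k), hle l⟩).1)
      (fun l hl hlk => hP.strictMono (e.strictMono ?_)) (fun l hl hlk => ?_) hl hlk
    · exact face_lt_face (by omega) (by omega) (by omega)
    · refine ⟨(hP.rk_bounds _).1, (hP.rk_mono (e _).2).trans ?_⟩
      rw [ψ.rk_face]
      omega
  intro x hx
  obtain rfl : x = ⟨φ.face (min l k), hle l⟩ :=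
    Subtype.ext (hx.trans (congrArg φ.face (min_eq_left hlk).symm))
  obtain ⟨p, hp⟩ := hmem ⟨_, hle l⟩ ⟨min l k, rfl⟩
  refine hP.eq_of_mem_flag (c := ψ.toFlag hP) ⟨p, hp⟩ (mem_toFlag hP ψ l) ?_
  rw [hrk l hl hlk, ψ.rk_face]
  omega

theorem eq_one_of_apply_eq {K : Type*} [PartialOrder K] (hKreg : IsRegularPolytope (P := K))
    (hk : -1 ≤ k) (hkn : k ≤ n) (hfaces : ∀ F : P, rk F = k → Nonempty (↥(Set.Iic F) ≃o K))
    {g : ↥(Set.Icc k n) → Equiv.Perm (RankedFlag n rk)}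
    (hg : g ∈ standardSubgroup (cutFlip k hP) (Set.Iio k)) {m : ↥(Set.Icc k n)}
    {φ : RankedFlag n rk} (hφ : g m φ = φ) : g = 1 := by
  funext m'
  rw [apply_eq_apply_of_mem hP hg m' m]
  ext ψ : 1
  have hrk : ∀ χ : RankedFlag n rk, rk (χ.face k) = k := fun χ => by rw [χ.rk_face]; omega
  obtain ⟨i₁⟩ := hfaces _ (hrk φ)
  obtain ⟨i₂⟩ := hfaces _ (hrk ψ)
  obtain ⟨e, he⟩ := exists_corresponds hP hKreg hk hkn φ ψ i₁ i₂
  have he' := (corresponds_apply_iff hP hkn hg m φ ψ).2 he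
  rw [hφ] at he'
  ext l : 2
  change (g m ψ).face l = ψ.face l
  by_cases hl : l < k
  · by_cases hl0 : l < 0
    · exact face_eq_of_outside hP _ _ (Or.inl hl0)
    · have hle : φ.face l ≤ φ.face k := φ.mono hl.le
      rw [← he.map l (by omega) hl.le ⟨_, hle⟩ rfl, ← he'.map l (by omega) hl.le ⟨_, hle⟩ rfl]
  · exact face_apply_of_mem hP hg m ψ hl

theorem isStringCGroup_cutFlip {K : Type*} [PartialOrder K] (hKreg : IsRegularPolytope (P := K))
    (hk : -1 ≤ k) (hkn : k ≤ n) (hfaces : ∀ F : P, rk F = k → Nonempty (↥(Set.Iic F) ≃o K))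
    (φ : RankedFlag n rk) : IsStringCGroup_s2 n (cutFlip k hP) := by
  have hcomm : ∀ i j, i + 2 ≤ j → Commute (cutFlip k hP i) (cutFlip k hP j) := by
    intro i j hij
    funext m
    change cutFlip k hP i m * cutFlip k hP j m = cutFlip k hP j m * cutFlip k hP i m
    rcases cutFlip_apply_eq hP i m with hi | hi <;> rcases cutFlip_apply_eq hP j m with hj | hj <;>
      rw [hi, hj]
    · ext ψ : 1
      exact flip_comm hP hij ψ
    all_goals simp
  refine ⟨fun i => ?_, hcomm, fun i hi => ?_, fun i hi hin hmem => ?_,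
    fun i j hij hjn g hgi hgj => ?_⟩
  · funext m
    rw [Pi.mul_apply]
    rcases cutFlip_apply_eq hP i m with h | h <;> rw [h]
    · ext ψ : 1
      exact flip_flip hP i ψ
    · simp
  · funext m
    rcases cutFlip_apply_eq hP i m with h | h <;> rw [h]
    · ext ψ : 1
      exact flip_of_outside hP hi ψ
    · rfl
  · have h := face_apply_of_mem hP hmem ⟨n, hkn, le_rfl⟩ φ (l := i) (by simp)
    rw [cutFlip_apply_last hP hkn] at h
    exact flip_face_self_ne hP hi hin φ h
  · refine mem_standardSubgroup_compl_pair_of_retractions hkn hcomm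
      (fun m hkm hmn => exists_retraction hP hkm hmn) ?_ hij hjn hgi hgj
    intro i j _ _ g hgi hgj
    obtain ⟨w, hw, hwφ⟩ := exists_mem_of_eq_off hP hkn (S := Set.Iio k \ {i, j}) (φ := φ)
        (ψ := g ⟨n, hkn, le_rfl⟩ φ) (by
      intro l hl
      by_cases hli : l ∈ Set.Iio k \ {i}
      · refine (face_apply_of_mem hP hgj _ φ fun hlj => hl ⟨hli.1, ?_⟩).symm
        rintro (h | h)
        · exact hli.2 h
        · exact hlj.2 h
      · exact (face_apply_of_mem hP hgi _ φ hli).symm)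
    have h1 : w⁻¹ * g = 1 := by
      refine eq_one_of_apply_eq hP hKreg hk hkn hfaces (m := ⟨n, hkn, le_rfl⟩) (φ := φ)
        (mul_mem (inv_mem (standardSubgroup_mono Set.sdiff_subset hw))
          (standardSubgroup_mono Set.sdiff_subset hgi)) ?_
      rw [Pi.mul_apply, Equiv.Perm.mul_apply, ← hwφ, Pi.inv_apply, Equiv.Perm.coe_inv,
        Equiv.symm_apply_apply]
    rwa [← inv_mul_eq_one.1 h1]

end RankedFlag

namespace CosetFace

open RankedFlag

variable {P : Type*} [PartialOrder P] {n k : ℤ} {rkP : P → ℤ} {hP : IsAbstractPolytope n rkP}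

/-- The face of the polytope below a face of its cover, with respect to a base flag `φ`. -/
noncomputable def proj (hkn : k ≤ n) (φ : RankedFlag n rkP) (x : CosetFace n (cutFlip k hP)) : P :=
  (x.exists_mem.choose ⟨n, hkn, le_rfl⟩ φ).face x.rk

theorem proj_eq (hkn : k ≤ n) (φ : RankedFlag n rkP) {x : CosetFace n (cutFlip k hP)}
    {g : ↥(Set.Icc k n) → Equiv.Perm (RankedFlag n rkP)} (hg : g ∈ x.coset) :
    proj hkn φ x = (g ⟨n, hkn, le_rfl⟩ φ).face x.rk := by
  have h := (mem_iff hg _).1 x.exists_mem.choose_spec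
  have := face_apply_of_mem hP h ⟨n, hkn, le_rfl⟩ (g ⟨n, hkn, le_rfl⟩ φ) (l := x.rk) (by simp)
  rw [← this, ← Equiv.Perm.mul_apply, ← Pi.mul_apply, inv_mul_cancel_right, proj]

theorem rk_proj (hkn : k ≤ n) (φ : RankedFlag n rkP) (x : CosetFace n (cutFlip k hP)) :
    rkP (proj hkn φ x) = x.rk := by
  have := x.rk_bounds
  rw [proj, RankedFlag.rk_face (rk := rkP)]
  omega

theorem proj_mono (hkn : k ≤ n) (φ : RankedFlag n rkP) (hr : IsStringCGroup_s2 n (cutFlip k hP)) :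
    letI := partialOrder hr
    Monotone (proj hkn φ : CosetFace n (cutFlip k hP) → P) := by
  rintro x y ⟨h, g, hgx, hgy⟩
  rw [proj_eq hkn φ hgx, proj_eq hkn φ hgy]
  exact (g _ φ).mono h

theorem image_proj_eq (hkn : k ≤ n)
    (φ : RankedFlag n rkP) {g : ↥(Set.Icc k n) → Equiv.Perm (RankedFlag n rkP)}
    (hg : g ∈ standardSubgroup (cutFlip k hP) Set.univ) {s : Set (CosetFace n (cutFlip k hP))}
    (hs : ∀ x, x ∈ s ↔ g ∈ x.coset) :
    proj hkn φ '' s = ((g ⟨n, hkn, le_rfl⟩ φ).toFlag hP : Set P) := by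
  ext z
  constructor
  · rintro ⟨x, hx, rfl⟩
    rw [proj_eq hkn φ ((hs x).1 hx)]
    exact mem_toFlag ..
  · intro hz
    refine ⟨mk g hg (rkP z) (hP.rk_bounds z), (hs _).2 (mem_mk _ _ _ _), ?_⟩
    rw [proj_eq hkn φ (mem_mk _ _ _ _), rk_mk]
    exact face_eq_of_mem hP (mem_toFlag hP _) hz

theorem isPolytopeCovering_proj [Finite (↥(Set.Icc k n) → Equiv.Perm (RankedFlag n rkP))]
    (hkn : k ≤ n) (φ : RankedFlag n rkP) (hr : IsStringCGroup_s2 n (cutFlip k hP)) :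
    letI := partialOrder hr
    IsPolytopeCovering (rk : CosetFace n (cutFlip k hP) → ℤ) rkP (proj hkn φ) := by
  let := partialOrder hr
  refine ⟨proj_mono hkn φ hr, rk_proj hkn φ, fun c => ?_, fun j c d c' d' hc' hd' hadj => ?_⟩
  · obtain ⟨g, hg, hc⟩ := exists_forall_mem_flag_iff hr c
    exact ⟨_, image_proj_eq hkn φ hg hc⟩
  obtain ⟨hne, hag⟩ := hadj
  refine ⟨?_, fun z hz => ?_⟩
  · rintro rfl
    obtain ⟨g, hg, hc⟩ := exists_forall_mem_flag_iff hr c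
    obtain ⟨h, hh, hd⟩ := exists_forall_mem_flag_iff hr d
    have hy : ∃ y ∈ d, y ∉ c := by
      by_contra! hcon
      exact hne (SetLike.coe_injective (d.max_chain' c.Chain' hcon)).symm
    obtain ⟨y, hyd, hyc⟩ := hy
    have hyj : y.rk = j := by
      by_contra hcon
      exact hyc ((hag y hcon).2 hyd)
    have hhy := (hd y).1 hyd
    have hgy : g ∉ y.coset := fun hcon => hyc ((hc y).2 hcon)
    have hj : 0 ≤ j ∧ j < n := by
      by_contra hcon
      refine hgy ((mem_iff hhy g).2 ?_)
      have hgh : g * h⁻¹ ∈ standardSubgroup (cutFlip k hP) Set.univ := mul_mem hg (inv_mem hh)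
      refine standardSubgroup_le (fun i _ => ?_) hgh
      by_cases hi : i = j
      · rw [hr.eq_one i (by omega)]
        exact one_mem _
      · exact mem_standardSubgroup (by simpa [hyj] using hi)
    have hcommon : ∀ l (hl : -1 ≤ l ∧ l ≤ n), l ≠ j →
        h ∈ (mk g hg l hl : CosetFace n (cutFlip k hP)).coset := fun l hl hlj =>
      (hd _).1 ((hag _ (by rwa [rk_mk])).1 ((hc _).2 (mem_mk _ _ _ _)))
    have hor := mem_coset_or_of_between hr (x := mk g hg (j - 1) (by omega)) (y := y)
      (z := mk g hg (j + 1) (by omega)) (g := g) (mem_mk _ _ _ _) (mem_mk _ _ _ _)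
      (by rw [rk_mk]; omega) (by rw [rk_mk, rk_mk]; omega)
      ⟨h, hcommon _ _ (by omega), hhy⟩ ⟨h, hhy, hcommon _ _ (by omega)⟩
    have hry := hor.resolve_left hgy
    rw [hyj] at hry
    have hyp := proj_eq hkn φ hry
    rw [Pi.mul_apply, Equiv.Perm.mul_apply, cutFlip_apply_last hP hkn, flipPerm_apply, hyj] at hyp
    have h₁ : proj hkn φ y ∈ c' := by
      change proj hkn φ y ∈ (c' : Set P)
      rw [← hd']
      exact ⟨y, hyd, rfl⟩
    have hx : mk g hg j (by omega) ∈ c := (hc _).2 (mem_mk _ _ _ _)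
    have h₂ : proj hkn φ (mk g hg j (by omega)) ∈ c' := by
      change proj hkn φ _ ∈ (c' : Set P)
      rw [← hc']
      exact ⟨_, hx, rfl⟩
    have heq := hP.eq_of_mem_flag h₁ h₂ (by rw [rk_proj hkn φ, rk_proj hkn φ, rk_mk, hyj])
    rw [hyp, proj_eq hkn φ (mem_mk _ _ _ _), rk_mk] at heq
    exact flip_face_self_ne hP hj.1 hj.2 _ heq
  · have key : z ∈ (c' : Set P) ↔ z ∈ (d' : Set P) := by
      rw [← hc', ← hd']
      constructor
      · rintro ⟨x, hx, rfl⟩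
        rw [rk_proj hkn φ] at hz
        exact ⟨x, (hag x hz).1 hx, rfl⟩
      · rintro ⟨x, hx, rfl⟩
        rw [rk_proj hkn φ] at hz
        exact ⟨x, (hag x hz).2 hx, rfl⟩
    exact key

theorem exists_mul_mem_of_le (hr : IsStringCGroup_s2 n (cutFlip k hP))
    {x F : CosetFace n (cutFlip k hP)} (hF : F.rk = k)
    (hx : letI := partialOrder hr; x ≤ F)
    {g : ↥(Set.Icc k n) → Equiv.Perm (RankedFlag n rkP)} (hg : g ∈ F.coset) :
    ∃ a ∈ standardSubgroup (cutFlip k hP) (Set.Iio k), a * g ∈ x.coset := by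
  obtain ⟨hle, u, hux, huF⟩ := hx
  have hu := (mem_iff hg u).1 huF
  rw [hF] at hu
  obtain ⟨a, ha, b, hb, hab⟩ := exists_mul_of_mem_standardSubgroup_compl hr.comm hu
  refine ⟨a, ha, ?_⟩
  have : a * g = b⁻¹ * u := by
    have hu' : u = a * b * g := by rw [← hab, inv_mul_cancel_right]
    rw [hu', (hr.commute_Iio_Ioi ha hb).eq]
    group
  rw [this]
  exact mul_mem_coset hux (inv_mem hb) (by simp; omega)

theorem nonempty_iic_orderIso {K : Type*} [PartialOrder K] (hKreg : IsRegularPolytope (P := K))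
    (hk : -1 ≤ k) (hkn : k ≤ n) (hfaces : ∀ F : P, rkP F = k → Nonempty (↥(Set.Iic F) ≃o K))
    (φ : RankedFlag n rkP) (hr : IsStringCGroup_s2 n (cutFlip k hP))
    {F : CosetFace n (cutFlip k hP)} (hF : F.rk = k) :
    letI := partialOrder hr
    Nonempty (↥(Set.Iic F) ≃o ↥(Set.Iic (proj hkn φ F))) := by
  let := partialOrder hr
  obtain ⟨g, hg⟩ := F.exists_mem
  let t : ↥(Set.Icc k n) := ⟨n, hkn, le_rfl⟩
  let χ := g t φ
  have hFχ : proj hkn φ F = χ.face k := by rw [proj_eq hkn φ hg, hF]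
  have hproj : ∀ {x : CosetFace n (cutFlip k hP)}
      {a : ↥(Set.Icc k n) → Equiv.Perm (RankedFlag n rkP)}, a * g ∈ x.coset →
      proj hkn φ x = (a t χ).face x.rk := fun h => proj_eq hkn φ h
  have hreflect : ∀ x y : CosetFace n (cutFlip k hP), x ≤ F → y ≤ F →
      proj hkn φ x ≤ proj hkn φ y → x ≤ y := by
    intro x y hx hy hxy
    obtain ⟨a, ha, hax⟩ := exists_mul_mem_of_le hr hF hx hg
    obtain ⟨b, hb, hby⟩ := exists_mul_mem_of_le hr hF hy hg
    have hyF : proj hkn φ y ≤ χ.face k := hFχ ▸ proj_mono hkn φ hr hy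
    obtain ⟨θ, hθ, hθx, hθy⟩ := exists_through hP χ hxy hyF
    rw [rk_proj hkn φ] at hθx hθy
    have hoff : ∀ {z : CosetFace n (cutFlip k hP)}
        {c : ↥(Set.Icc k n) → Equiv.Perm (RankedFlag n rkP)},
        c ∈ standardSubgroup (cutFlip k hP) (Set.Iio k) → c * g ∈ z.coset →
        θ.face z.rk = proj hkn φ z →
        ∃ w ∈ standardSubgroup (cutFlip k hP) (Set.Iio k), w t χ = θ ∧ w * g ∈ z.coset := by
      intro z c hc hcz hz
      obtain ⟨w, hw, hwθ⟩ := exists_mem_of_eq_off hP hkn (S := Set.Iio k \ {z.rk}) (φ := c t χ)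
          (ψ := θ) (by
        intro l hl
        by_cases hlk : l < k
        · obtain rfl : l = z.rk := by
            by_contra h
            exact hl ⟨hlk, h⟩
          rw [hz, hproj hcz]
        · rw [hθ l (by omega), face_apply_of_mem hP hc t χ hlk])
      refine ⟨w * c, mul_mem (standardSubgroup_mono Set.sdiff_subset hw) hc, hwθ, ?_⟩
      rw [mul_assoc]
      exact mul_mem_coset hcz hw (by simp)
    obtain ⟨w, hw, hwθ, hwx⟩ := hoff ha hax hθx
    obtain ⟨v, hv, hvθ, hvy⟩ := hoff hb hby hθy
    have h1 : w⁻¹ * v = 1 := by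
      refine eq_one_of_apply_eq hP hKreg hk hkn hfaces (mul_mem (inv_mem hw) hv) (m := t)
        (φ := χ) ?_
      rw [Pi.mul_apply, Equiv.Perm.mul_apply, hvθ, ← hwθ, Pi.inv_apply, Equiv.Perm.coe_inv,
        Equiv.symm_apply_apply]
    have hwv := inv_mul_eq_one.1 h1
    refine ⟨?_, w * g, hwx, hwv ▸ hvy⟩
    rw [← rk_proj hkn φ x, ← rk_proj hkn φ y]
    exact hP.rk_mono hxy
  let f : ↥(Set.Iic F) ↪o ↥(Set.Iic (proj hkn φ F)) :=
    OrderEmbedding.ofMapLEIff (fun x => ⟨proj hkn φ x.1, proj_mono hkn φ hr x.2⟩)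
      fun x y => ⟨hreflect x.1 y.1 x.2 y.2, fun h => proj_mono hkn φ hr h⟩
  refine ⟨RelIso.ofSurjective f fun z => ?_⟩
  have hz : z.1 ≤ χ.face k := hFχ ▸ z.2
  obtain ⟨θ, hθ, hθz, -⟩ := exists_through hP χ le_rfl hz
  obtain ⟨w, hw, hwθ⟩ := exists_mem_of_eq_off hP hkn (S := Set.Iio k) (φ := χ) (ψ := θ)
    fun l hl => (hθ l (not_lt.1 hl)).symm
  have hwF : w * g ∈ F.coset := mul_mem_coset hg hw (by simp [hF])
  have hzk : rkP z.1 ≤ F.rk := by rw [← rk_proj hkn φ F]; exact hP.rk_mono z.2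
  let x : CosetFace n (cutFlip k hP) :=
    mk (w * g) (mem_univ_of_mem hwF) (rkP z.1) (hP.rk_bounds z.1)
  have hwx : w * g ∈ x.coset := mem_mk _ _ _ _
  refine ⟨⟨x, hzk, w * g, hwx, hwF⟩, Subtype.ext ?_⟩
  change proj hkn φ x = z.1
  rw [hproj hwx]
  exact hwθ ▸ hθz

end CosetFace

/-- **If all `k`-faces of a finite `n`-polytope `Q` are isomorphic to one fixed
regular `k`-polytope `K`, then `Q` has a finite regular cover `R` all of whose
`k`-faces are isomorphic to `K`.**  The `k`-face determined by a face `F` of rank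
`k` is the section `F/F₋₁ = {H : H ≤ F}` (the least face lies below every face). -/
theorem finite_polytope_has_finite_regular_cover_preserving_k_faces
    {n k : ℕ} (hk1 : 1 ≤ k) (hkn : (k : ℤ) ≤ (n : ℤ) - 1)
    {Q : Type} [PartialOrder Q] [Finite Q] (rkQ : Q → ℤ)
    (hQ : IsAbstractPolytope (n : ℤ) rkQ)
    {K : Type} [PartialOrder K] (rkK : K → ℤ)
    (hK : IsAbstractPolytope (k : ℤ) rkK) (hKreg : IsRegularPolytope (P := K))
    (hfaces : ∀ F : Q, rkQ F = k → Nonempty (↥(Set.Iic F) ≃o K)) :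
    ∃ R : BundledPolytope (n : ℤ), Finite R.carrier ∧ IsRegularPolytope (P := R.carrier) ∧
      (∃ η : R.carrier → Q, IsPolytopeCovering R.rk rkQ η) ∧
      ∀ F : R.carrier, R.rk F = k → Nonempty (↥(Set.Iic F) ≃o K) := by
  obtain ⟨c⟩ : Nonempty (Flag Q) := inferInstance
  obtain ⟨φ, -⟩ := RankedFlag.exists_of_flag hQ c
  have hkn' : (k : ℤ) ≤ n := by omega
  have hr := RankedFlag.isStringCGroup_cutFlip hQ hKreg (by omega) hkn' hfaces φ
  have := RankedFlag.finite hQ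
  let := CosetFace.partialOrder hr
  refine ⟨⟨CosetFace (n : ℤ) (RankedFlag.cutFlip k hQ), CosetFace.rk,
    CosetFace.isAbstractPolytope (by omega) hr⟩, (inferInstance : Finite (CosetFace _ _)),
    CosetFace.isRegularPolytope hr, ⟨_, CosetFace.isPolytopeCovering_proj hkn' φ hr⟩,
    fun F hF => ?_⟩
  obtain ⟨e⟩ := CosetFace.nonempty_iic_orderIso hKreg (by omega) hkn' hfaces φ hr hF
  obtain ⟨i⟩ := hfaces _ ((CosetFace.rk_proj hkn' φ F).trans hF)
  exact ⟨e.trans i⟩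
end

section
/- Let G = ⟨g_0, ..., g_{n-1}⟩ be an sggi and let 0 ≤ i ≤ n-2. Suppose there exists a string C-group H = ⟨h_0, ..., h_i⟩ of rank i+1 which covers the sggi ⟨g_0, ..., g_i⟩. Then there exists a string C-group L = ⟨l_0, ..., l_{i+1}⟩ of rank i+2 which covers ⟨g_0, ..., g_{i+1}⟩. Moreover, L may be chosen so that: (i) for every j ≤ i, if ⟨g_0, ..., g_j⟩ is isomorphic to ⟨h_0, ..., h_j⟩ via a map sending h_t to g_t, then ⟨g_0, ..., g_j⟩ is isomorphic to ⟨l_0, ..., l_j⟩ via a map sending l_t to g_t; and (ii) if ⟨g_0, ..., g_{i+1}⟩ and H are both finite, then L is finite. -/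
section Involutions

variable {G : Type*} [Group G]

theorem commute_of_sq_eq_one {a b : G} (ha : a ^ 2 = 1) (hb : b ^ 2 = 1)
    (hab : (a * b) ^ 2 = 1) : Commute a b := by
  rw [sq] at ha hb hab
  have h₁ : a * b = (a * b)⁻¹ := eq_inv_of_mul_eq_one_left hab
  rw [mul_inv_rev, ← eq_inv_of_mul_eq_one_left ha, ← eq_inv_of_mul_eq_one_left hb] at h₁
  exact h₁

theorem commute_of_mem_closure {S T : Set G} (hST : ∀ s ∈ S, ∀ t ∈ T, Commute s t)
    {a b : G} (ha : a ∈ Subgroup.closure S) (hb : b ∈ Subgroup.closure T) : Commute a b := by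
  have hT : S ⊆ Subgroup.centralizer T := fun s hs =>
    Subgroup.mem_centralizer_iff.2 fun t ht => (hST s hs t ht).eq.symm
  have ha' := (Subgroup.closure_le _).2 hT ha
  rw [← Subgroup.centralizer_closure] at ha'
  exact (Subgroup.mem_centralizer_iff.1 ha' b hb).symm

/-- In an sggi, omitting the generator `g m` splits a parabolic subgroup as a product. -/
theorem IsSggi.exists_mul_of_notMem {n : ℕ} {g : Fin n → G} (hg : IsSggi g) {J : Set (Fin n)}
    {m : Fin n} (hm : m ∉ J) {x : G} (hx : x ∈ Subgroup.closure (g '' J)) :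
    ∃ c ∈ Subgroup.closure (g '' (J ∩ Set.Iio m)),
      ∃ d ∈ Subgroup.closure (g '' (J ∩ Set.Ioi m)), c * d = x := by
  have hcomm : ∀ s ∈ g '' (J ∩ Set.Iio m), ∀ t ∈ g '' (J ∩ Set.Ioi m), Commute s t := by
    rintro _ ⟨a, ⟨-, ha⟩, rfl⟩ _ ⟨b, ⟨-, hb⟩, rfl⟩
    refine commute_of_sq_eq_one (hg.2.1 a) (hg.2.1 b) (hg.2.2 a b ?_)
    simp only [Set.mem_Iio, Set.mem_Ioi, Fin.lt_def] at ha hb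
    rw [lt_abs]
    omega
  induction hx using Subgroup.closure_induction with
  | mem x hx =>
    obtain ⟨j, hj, rfl⟩ := hx
    rcases lt_or_gt_of_ne (fun h : j = m => hm (h ▸ hj)) with h | h
    · exact ⟨g j, Subgroup.subset_closure ⟨j, ⟨hj, h⟩, rfl⟩, 1, one_mem _, mul_one _⟩
    · exact ⟨1, one_mem _, g j, Subgroup.subset_closure ⟨j, ⟨hj, h⟩, rfl⟩, one_mul _⟩
  | one => exact ⟨1, one_mem _, 1, one_mem _, one_mul _⟩
  | mul x y _ _ ihx ihy =>
    obtain ⟨c, hc, d, hd, rfl⟩ := ihx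
    obtain ⟨c', hc', d', hd', rfl⟩ := ihy
    exact ⟨c * c', mul_mem hc hc', d * d', mul_mem hd hd',
      (commute_of_mem_closure hcomm hc' hd).mul_mul_mul_comm c d'⟩
  | inv x _ ih =>
    obtain ⟨c, hc, d, hd, rfl⟩ := ih
    refine ⟨c⁻¹, inv_mem hc, d⁻¹, inv_mem hd, ?_⟩
    rw [(commute_of_mem_closure hcomm hc hd).eq, mul_inv_rev]

end Involutions

theorem map_mem_closure_image {L H ι κ : Type*} [Group L] [Group H] {l : ι → L} {h : κ → H}
    (ρ : L →* H) {I : Set ι} {J : Set κ}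
    (hIJ : ∀ t ∈ I, ρ (l t) ∈ Subgroup.closure (h '' J)) {x : L}
    (hx : x ∈ Subgroup.closure (l '' I)) : ρ x ∈ Subgroup.closure (h '' J) := by
  suffices Subgroup.closure (l '' I) ≤ (Subgroup.closure (h '' J)).comap ρ from this hx
  rw [Subgroup.closure_le]
  rintro _ ⟨t, ht, rfl⟩
  exact hIJ t ht

section Retraction

variable {L H : Type*} [Group L] [Group H] {m : ℕ} {l : Fin (m + 1) → L} {h : Fin m → H}
  {ρ : L →* H} {σ : H →* L}

theorem retraction_leftInverse_of_mem_closure {ι : Type*} {l : ι → L} {h : ι → H}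
    (hρ : ∀ t, ρ (l t) = h t) (hσ : ∀ t, σ (h t) = l t) {x : L}
    (hx : x ∈ Subgroup.closure (Set.range l)) : σ (ρ x) = x := by
  have : Set.EqOn (σ.comp ρ) (MonoidHom.id L) (Set.range l) := by
    rintro _ ⟨t, rfl⟩
    simp [hρ, hσ]
  exact MonoidHom.eqOn_closure this hx

theorem closure_inf_le_of_retraction (hH : IsStringCGroup h)
    (hρ : ∀ t, ρ (l t.castSucc) = h t) (hlast : ρ (l (Fin.last m)) = 1)
    (hσ : ∀ t, σ (h t) = l t.castSucc) {I : Set (Fin (m + 1))} (hI : Fin.last m ∉ I)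
    (J : Set (Fin (m + 1))) :
    Subgroup.closure (l '' I) ⊓ Subgroup.closure (l '' J) ≤ Subgroup.closure (l '' (I ∩ J)) := by
  have key : ∀ K : Set (Fin (m + 1)), ∀ t ∈ K,
      ρ (l t) ∈ Subgroup.closure (h '' (Fin.castSucc ⁻¹' K)) := by
    intro K t ht
    induction t using Fin.lastCases with
    | last => rw [hlast]; exact one_mem _
    | cast t => rw [hρ]; exact Subgroup.subset_closure ⟨t, ht, rfl⟩
  rintro x ⟨hxI, hxJ⟩
  have hmem : ρ x ∈ Subgroup.closure (h '' (Fin.castSucc ⁻¹' (I ∩ J))) := by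
    rw [Set.preimage_inter, ← hH.2.2]
    exact ⟨map_mem_closure_image ρ (key I) hxI, map_mem_closure_image ρ (key J) hxJ⟩
  have hx : x ∈ Subgroup.closure (Set.range fun t : Fin m => l t.castSucc) := by
    refine Subgroup.closure_mono ?_ hxI
    rintro _ ⟨t, ht, rfl⟩
    induction t using Fin.lastCases with
    | last => exact absurd ht hI
    | cast t => exact ⟨t, rfl⟩
  rw [← retraction_leftInverse_of_mem_closure hρ hσ hx]
  refine map_mem_closure_image σ ?_ hmem
  intro t ht
  rw [hσ]
  exact Subgroup.subset_closure ⟨_, ht, rfl⟩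

/-- An sggi which retracts onto a string C-group on all generators but the last,
killing the last one, is a string C-group. -/
theorem IsSggi.isStringCGroup_of_retraction (hl : IsSggi l) (hH : IsStringCGroup h)
    (hρ : ∀ t, ρ (l t.castSucc) = h t) (hlast : ρ (l (Fin.last m)) = 1)
    (hσ : ∀ t, σ (h t) = l t.castSucc) (hne : l (Fin.last m) ≠ 1) : IsStringCGroup l := by
  have splitting : ∀ (I J : Set (Fin (m + 1))) (k : Fin (m + 1)), k ∉ J → Set.Ioi k ⊆ I →
      Subgroup.closure (l '' I) ⊓ Subgroup.closure (l '' J)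
        ≤ Subgroup.closure (l '' (I ∩ J)) := by
    rintro I J k hkJ hkI x ⟨hxI, hxJ⟩
    obtain ⟨c, hc, d, hd, rfl⟩ := hl.exists_mul_of_notMem hkJ hxJ
    have hd' : d ∈ Subgroup.closure (l '' (I ∩ J)) :=
      Subgroup.closure_mono (Set.image_mono fun _ ht => Set.mem_inter (hkI ht.2) ht.1) hd
    have hdI : d ∈ Subgroup.closure (l '' I) :=
      Subgroup.closure_mono (Set.image_mono Set.inter_subset_left) hd'
    have hcI : c ∈ Subgroup.closure (l '' I) := (Subgroup.mul_mem_cancel_right _ hdI).1 hxI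
    have hc' := closure_inf_le_of_retraction hH hρ hlast hσ
      (fun hk => absurd hk.2 (Fin.le_last k).not_gt) I ⟨hc, hcI⟩
    exact mul_mem (Subgroup.closure_mono
      (Set.image_mono fun _ ht => Set.mem_inter ht.2 ht.1.1) hc') hd'
  refine ⟨hl, fun t => orderOf_eq_prime (hl.2.1 t) ?_, fun I J => le_antisymm ?_ ?_⟩
  · induction t using Fin.lastCases with
    | last => exact hne
    | cast t =>
      intro h1
      have := hH.2.1 t
      rw [← hρ, h1, map_one, orderOf_one] at this
      omega
  · by_cases hIJ : I ∩ J = Set.univ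
    · rw [hIJ, Set.univ_subset_iff.1 (hIJ.ge.trans Set.inter_subset_left)]
      exact inf_le_left
    obtain ⟨k, hk⟩ := (Set.toFinite (I ∩ J)ᶜ).exists_maximal (Set.nonempty_compl.2 hIJ)
    have hIoi : Set.Ioi k ⊆ I ∩ J := fun t ht => by
      by_contra hcon
      exact hk.not_gt hcon ht
    by_cases hkJ : k ∈ J
    · rw [inf_comm, Set.inter_comm]
      exact splitting J I k (fun hkI => hk.prop ⟨hkI, hkJ⟩) (hIoi.trans Set.inter_subset_right)
    · exact splitting I J k hkJ (hIoi.trans Set.inter_subset_left)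
  · exact le_inf (Subgroup.closure_mono (Set.image_mono Set.inter_subset_left))
      (Subgroup.closure_mono (Set.image_mono Set.inter_subset_right))

theorem SggiIsoVia.of_retraction {G : Type*} [Group G] {k : ℕ} {l : Fin k → L} {h : Fin k → H}
    {g : Fin k → G} (hhg : SggiIsoVia h g) (hρ : ∀ t, ρ (l t) = h t)
    (hσ : ∀ t, σ (h t) = l t) : SggiIsoVia l g := by
  obtain ⟨φ, hφ, hφg⟩ := hhg
  have hmem : ∀ x : Subgroup.closure (Set.range l), ρ x ∈ Subgroup.closure (Set.range h) := by
    rintro ⟨x, hx⟩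
    rw [← Set.image_univ] at hx ⊢
    exact map_mem_closure_image ρ (fun t _ => hρ t ▸ Subgroup.subset_closure ⟨t, trivial, rfl⟩) hx
  refine ⟨φ.comp ((ρ.comp (Subgroup.subtype _)).codRestrict _ hmem), ?_, ?_⟩
  · intro x y hxy
    have hxy' : ρ x = ρ y := congrArg Subtype.val (hφ hxy)
    apply Subtype.ext
    rw [← retraction_leftInverse_of_mem_closure hρ hσ x.2, hxy',
      retraction_leftInverse_of_mem_closure hρ hσ y.2]
  · intro t
    rw [← hφg t]
    exact congrArg φ (Subtype.ext (hρ t))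

end Retraction

section Bump

variable {H G : Type*} [Group H] {m : ℕ}

/-- The tuple `(h t, 1, g t)` for `t < m`, followed by `(1, s, g m)` with `s` the generator of
the cyclic group of order two. -/
def bumpGen (h : Fin m → H) (g : Fin (m + 1) → G) :
    Fin (m + 1) → H × Multiplicative (ZMod 2) × G :=
  Fin.lastCases (1, Multiplicative.ofAdd 1, g (Fin.last m)) fun t => (h t, 1, g t.castSucc)

@[simp]
theorem bumpGen_last (h : Fin m → H) (g : Fin (m + 1) → G) :
    bumpGen h g (Fin.last m) = (1, Multiplicative.ofAdd 1, g (Fin.last m)) :=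
  Fin.lastCases_last

@[simp]
theorem bumpGen_castSucc (h : Fin m → H) (g : Fin (m + 1) → G) (t : Fin m) :
    bumpGen h g t.castSucc = (h t, 1, g t.castSucc) :=
  Fin.lastCases_castSucc t

theorem bumpGen_snd_snd (h : Fin m → H) (g : Fin (m + 1) → G) (t : Fin (m + 1)) :
    (bumpGen h g t).2.2 = g t := by
  induction t using Fin.lastCases <;> simp

theorem bumpGen_sq [Group G] {h : Fin m → H} {g : Fin (m + 1) → G} (hh : ∀ t, h t ^ 2 = 1)
    (hg : ∀ t, g t ^ 2 = 1) (t : Fin (m + 1)) : bumpGen h g t ^ 2 = 1 := by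
  have hs : (Multiplicative.ofAdd (1 : ZMod 2)) ^ 2 = 1 := rfl
  induction t using Fin.lastCases <;> simp [Prod.ext_iff, hh, hg, hs]

theorem bumpGen_mul_sq [Group G] {h : Fin m → H} {g : Fin (m + 1) → G} (hh : ∀ t, h t ^ 2 = 1)
    (hh' : ∀ s t : Fin m, 1 < |(s : ℤ) - (t : ℤ)| → (h s * h t) ^ 2 = 1)
    (hg' : ∀ s t : Fin (m + 1), 1 < |(s : ℤ) - (t : ℤ)| → (g s * g t) ^ 2 = 1)
    (s t : Fin (m + 1)) (hst : 1 < |(s : ℤ) - (t : ℤ)|) :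
    (bumpGen h g s * bumpGen h g t) ^ 2 = 1 := by
  have h2 : (Multiplicative.ofAdd (1 : ZMod 2)) ^ 2 = 1 := rfl
  have hgst := hg' s t hst
  induction s using Fin.lastCases with
  | last =>
    induction t using Fin.lastCases with
    | last => simp at hst
    | cast t => simp [Prod.ext_iff, hh, h2, hgst]
  | cast s =>
    induction t using Fin.lastCases with
    | last => simp [Prod.ext_iff, hh, h2, hgst]
    | cast t => simp [Prod.ext_iff, hh' s t (by simpa using hst), hgst]

end Bump

theorem isSggi_closure {A : Type*} [Group A] {n : ℕ} {a : Fin n → A} (ha : ∀ t, a t ^ 2 = 1)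
    (ha' : ∀ s t : Fin n, 1 < |(s : ℤ) - (t : ℤ)| → (a s * a t) ^ 2 = 1) :
    IsSggi fun t => (⟨a t, Subgroup.subset_closure ⟨t, rfl⟩⟩ :
      Subgroup.closure (Set.range a)) := by
  refine ⟨?_, fun t => Subtype.ext (ha t), fun s t hst => Subtype.ext (ha' s t hst)⟩
  rw [← Subgroup.closure_closure_coe_preimage]
  congr 1
  ext ⟨x, hx⟩
  simp [Subtype.ext_iff]

/-- **Lemma (bump).**  Let `G = ⟨g 0, ..., g (n-1)⟩` be an sggi and `0 ≤ i ≤ n-2`.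
If there is a string C-group `H = ⟨h 0, ..., h i⟩` covering `⟨g 0, ..., g i⟩`,
then there is a string C-group `L = ⟨l 0, ..., l (i+1)⟩` covering
`⟨g 0, ..., g (i+1)⟩`; moreover `L` may be chosen so that (i) for every `j ≤ i`,
if `⟨g 0, ..., g j⟩ ≅ ⟨h 0, ..., h j⟩` via `h t ↦ g t` then also
`⟨g 0, ..., g j⟩ ≅ ⟨l 0, ..., l j⟩` via `l t ↦ g t`, and (ii) if
`⟨g 0, ..., g (i+1)⟩` and `H` are finite then `L` is finite. -/
theorem stringCGroup_cover_bump {n : ℕ} {G : Type} [Group G] (g : Fin n → G)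
    (hG : IsSggi g) (i : ℕ) (hi : i + 2 ≤ n)
    {H : Type} [Group H] (h : Fin (i + 1) → H) (hH : IsStringCGroup h)
    (hcov : SggiCovers h (fun t : Fin (i + 1) => g (Fin.castLE (by omega) t))) :
    ∃ (L : BundledGroup) (l : Fin (i + 2) → L.carrier),
      IsStringCGroup l ∧
      SggiCovers l (fun t : Fin (i + 2) => g (Fin.castLE (by omega) t)) ∧
      (∀ j : ℕ, (hj : j + 1 ≤ i + 1) →
        SggiIsoVia (fun t : Fin (j + 1) => h (Fin.castLE (by omega) t))
            (fun t : Fin (j + 1) => g (Fin.castLE (by omega) t)) →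
        SggiIsoVia (fun t : Fin (j + 1) => l (Fin.castLE (by omega) t))
            (fun t : Fin (j + 1) => g (Fin.castLE (by omega) t))) ∧
      (Finite H →
        Finite ↥(Subgroup.closure
          (Set.range fun t : Fin (i + 2) => g (Fin.castLE (by omega) t))) →
        Finite L.carrier) := by
  obtain ⟨φ, hφ, -⟩ := hcov
  set g' : Fin (i + 2) → G := fun t => g (Fin.castLE (by omega) t)
  have hφ' : ∀ t, φ (h t) = g' t.castSucc := hφ
  let a := bumpGen h g'
  let l : Fin (i + 2) → Subgroup.closure (Set.range a) :=
    fun t => ⟨a t, Subgroup.subset_closure ⟨t, rfl⟩⟩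
  have hl : IsSggi l :=
    isSggi_closure (bumpGen_sq hH.1.2.1 fun t => hG.2.1 _)
      (bumpGen_mul_sq hH.1.2.1 hH.1.2.2 fun s t hst => hG.2.2 _ _ hst)
  let ρ : Subgroup.closure (Set.range a) →* H := (MonoidHom.fst _ _).comp (Subgroup.subtype _)
  let σ₀ : H →* H × Multiplicative (ZMod 2) × G :=
    (MonoidHom.id H).prod ((1 : H →* Multiplicative (ZMod 2)).prod φ)
  have hσ₀ : ∀ t, σ₀ (h t) = a t.castSucc := fun t => by simp [σ₀, a, hφ']
  have hmem : ∀ y, σ₀ y ∈ Subgroup.closure (Set.range a) := by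
    intro y
    have hy : y ∈ Subgroup.closure (Set.range h) := hH.1.1 ▸ Subgroup.mem_top y
    rw [← Set.image_univ] at hy ⊢
    exact map_mem_closure_image σ₀
      (fun t _ => hσ₀ t ▸ Subgroup.subset_closure ⟨_, trivial, rfl⟩) hy
  let σ : H →* Subgroup.closure (Set.range a) := σ₀.codRestrict _ hmem
  have hρ : ∀ t, ρ (l t.castSucc) = h t := fun t => by simp [ρ, l, a]
  have hlast : ρ (l (Fin.last _)) = 1 := by simp [ρ, l, a]
  have hσ : ∀ t, σ (h t) = l t.castSucc := fun t => Subtype.ext (hσ₀ t)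
  have hne : l (Fin.last _) ≠ 1 := by
    intro h1
    have h2 : (a (Fin.last _)).2.1 = 1 := congrArg (fun x => x.1.2.1) h1
    simp only [a, bumpGen_last] at h2
    exact absurd h2 (by decide)
  have hL := hl.isStringCGroup_of_retraction hH hρ hlast hσ hne
  let π : H × Multiplicative (ZMod 2) × G →* G := (MonoidHom.snd _ _).comp (MonoidHom.snd _ _)
  have hπ : π ∘ a = g' := funext (bumpGen_snd_snd h g')
  have hmap : (Subgroup.closure (Set.range a)).map π = Subgroup.closure (Set.range g') := by
    rw [MonoidHom.map_closure, ← Set.range_comp, hπ]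
  refine ⟨⟨Subgroup.closure (Set.range a)⟩, l, hL, ?_, ?_, ?_⟩
  · refine ⟨π.comp (Subgroup.subtype _), fun t => congrFun hπ t, ?_⟩
    rw [MonoidHom.range_comp, Subgroup.range_subtype, hmap]
  · intro j hj hiso
    exact hiso.of_retraction (ρ := ρ) (σ := σ) (fun t => hρ (Fin.castLE hj t))
      (fun t => hσ (Fin.castLE hj t))
  · intro hHfin hGfin
    refine Finite.of_injective (β := H × Multiplicative (ZMod 2) × Subgroup.closure (Set.range g'))
      (fun x => (x.1.1, x.1.2.1, ⟨x.1.2.2, hmap ▸ Subgroup.mem_map_of_mem π x.2⟩)) ?_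
    intro x y hxy
    simp only [Prod.mk.injEq, Subtype.mk.injEq] at hxy
    exact Subtype.ext (Prod.ext hxy.1 (Prod.ext hxy.2.1 hxy.2.2))
end
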